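/- arXiv:2309.08518 — 2 statements merged into one kernel-verified Lean document; each statement's English description precedes it below -/
import Mathlib

section
/- Let A be a totally ordered alphabet and let J and C be sentences over A with |J| = |C|. If wℓ(J) ⪰ wℓ(C) in the reverse lexicographic order on compositions (i.e., at the first index where the compositions of word lengths differ, wℓ(J) has the smaller entry) and K_{J,C} ≠ 0, then J = C; moreover K_{J,J} = 1. Consequently, the transition matrix from the colored dual immaculate functions to the colored monomial functions is upper unitriangular, and the colored dual immaculate functions {𝔖*_J} form a basis of QSym_A. -/
open scoped BigOperators

namespace ColoredImm

variable {A : Type*}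

/-- A *weak sentence* over the alphabet `A`: a finite list of words (words may be empty). -/
abbrev Sentence (A : Type*) := List (List A)

/-- A genuine *sentence*: all of its words are nonempty. -/
def IsSentence (I : Sentence A) : Prop := ∀ w ∈ I, w ≠ []

/-- The size `|I|` of a sentence: its total number of letters. -/
def size (I : Sentence A) : ℕ := (I.map List.length).sum

/-- The word lengths `wℓ(I)` of a sentence. -/
def wl (I : Sentence A) : List ℕ := I.map List.length

/-- The flattening of a weak sentence: delete all empty words. -/
def flattenWS (I : Sentence A) : Sentence A := I.filter (fun w => !w.isEmpty)

/-- `Refines J I` means `J ⪯ I`: the sentence `I` can be obtained by concatenating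
some adjacent words of `J` (so `J` is a refinement of `I`, and `I` a coarsening of `J`). -/
def Refines (J I : Sentence A) : Prop :=
  ∃ P : List (Sentence A), (∀ p ∈ P, p ≠ []) ∧ P.flatten = J ∧ P.map List.flatten = I

/-! ### Fillings and colored immaculate tableaux -/

/-- An integer filling of a diagram, recorded row by row. -/
abbrev Filling := List (List ℕ)

/-- The entry of a filling at box `b = (row, column)` (0-indexed), with default `0`. -/
def entryAt (f : Filling) (b : ℕ × ℕ) : ℕ := (f.getD b.1 []).getD b.2 0

/-- `IsCIT I f`: `f` is a colored immaculate tableau of shape `I`; that is, `f` has the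
same shape as the colored composition diagram of `I`, its entries are positive integers
weakly increasing left to right along each row, and the entries in the first column are
strictly increasing from top to bottom. -/
def IsCIT (I : Sentence A) (f : Filling) : Prop :=
  f.map List.length = I.map List.length ∧
  (∀ row ∈ f, row.Chain' (· ≤ ·)) ∧
  (f.filterMap List.head?).Chain' (· < ·) ∧
  (∀ x ∈ f.flatten, 1 ≤ x)

/-- The colors (letters of `w`) of the boxes of one row whose entry (in `row`) is `v`,
read from left to right. -/
def rowWith (w : List A) (row : List ℕ) (v : ℕ) : List A :=
  ((w.zip row).filter (fun p => p.2 == v)).map Prod.fst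

/-- The word of the type of a tableau at value `v`: the colors of all boxes with entry `v`,
read left to right, from the bottom row up to the top row. -/
def typeWord (I : Sentence A) (f : Filling) (v : ℕ) : List A :=
  (((I.zip f).reverse).map (fun p => rowWith p.1 p.2 v)).flatten

/-- `HasType I f B` : the tableau `f` (of shape `I`) has type the weak sentence `B`,
i.e. for every positive integer `v`, the colors of the boxes of `f` containing `v`
(read left to right, bottom to top) form the `v`-th word of `B`. -/
def HasType (I : Sentence A) (f : Filling) (B : Sentence A) : Prop :=
  ∀ v, 1 ≤ v → typeWord I f v = B.getD (v - 1) []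

/-- `K_{J,B}`: the number of colored immaculate tableaux of shape `J` and type `B`. -/
noncomputable def KJB (J B : Sentence A) : ℕ :=
  Set.ncard {f : Filling | IsCIT J f ∧ HasType J f B}

/-! ### Standardization -/

/-- The list of boxes of a filling. -/
def boxes (f : Filling) : List (ℕ × ℕ) :=
  ((List.range f.length).map
    (fun r => (List.range (f.getD r []).length).map (fun j => (r, j)))).flatten

/-- `beforeB f b b'`: box `b` comes strictly before box `b'` in the type-reading order of `f`
(smaller entries first; among equal entries, lower rows first, and within a row left to right). -/
def beforeB (f : Filling) (b b' : ℕ × ℕ) : Bool :=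
  entryAt f b < entryAt f b' ||
    (entryAt f b == entryAt f b' && (b'.1 < b.1 || (b.1 == b'.1 && b.2 < b'.2)))

/-- The standardization of a filling: each box is renumbered (starting from `1`)
according to its position in the type-reading order. -/
def stdFill (f : Filling) : Filling :=
  (List.range f.length).map (fun r =>
    (List.range (f.getD r []).length).map (fun j =>
      1 + ((boxes f).filter (fun b' => beforeB f b' (r, j))).length))

/-- The number of boxes of a filling. -/
def nBoxes (f : Filling) : ℕ := f.flatten.length

/-- A filling of `n` boxes is standard when its entries are exactly `1, …, n`,
each appearing once. -/
def IsStandardF (f : Filling) : Prop := f.flatten.Perm (List.range' 1 (nBoxes f))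

/-! ### Descents and the colored descent composition -/

/-- The (0-indexed) row containing the value `v` in a standard filling. -/
def rowOf (f : Filling) (v : ℕ) : ℕ := f.findIdx (fun row => row.contains v)

/-- The sorted list of descents of a standard filling: those `i` with `1 ≤ i ≤ n-1`
such that `i+1` lies in a strictly lower row than `i`. -/
def descList (f : Filling) : List ℕ :=
  (List.range' 1 (nBoxes f - 1)).filter (fun i => decide (rowOf f i < rowOf f (i + 1)))

/-- The composition of `n` associated to a set of split positions `d_1 < … < d_k`:
`(d_1, d_2 - d_1, …, n - d_k)`. -/
def compOf (ds : List ℕ) (n : ℕ) : List ℕ :=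
  List.zipWith (fun a b => b - a) (0 :: ds) (ds ++ [n])

/-- Split a word into a sentence according to a composition. -/
def splitByComp : List A → List ℕ → List (List A)
  | _, [] => []
  | w, a :: rest => w.take a :: splitByComp (w.drop a) rest

/-- The color of the box containing the value `v` in a standard filling of shape `I`. -/
def colorOf [Inhabited A] (I : Sentence A) (f : Filling) (v : ℕ) : A :=
  (I.getD (rowOf f v) []).getD ((f.getD (rowOf f v) []).findIdx (fun x => x == v)) default

/-- The maximal word of the colored descent composition of a standard filling of shape `I`:
the colors of its boxes read in the order of their integer entries. -/
def readWord [Inhabited A] (I : Sentence A) (f : Filling) : List A :=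
  (List.range (nBoxes f)).map (fun i => colorOf I f (i + 1))

/-- The colored descent composition `co_A(U)` of a standard colored immaculate tableau:
read the colors of the boxes in the order of their entries, starting a new word
immediately after each descent. -/
def coA [Inhabited A] (I : Sentence A) (f : Filling) : Sentence A :=
  if nBoxes f = 0 then [] else splitByComp (readWord I f) (compOf (descList f) (nBoxes f))

/-- `L_{J,C}`: the number of standard colored immaculate tableaux of shape `J`
with colored descent composition `C`. -/
noncomputable def LJC [Inhabited A] (J C : Sentence A) : ℕ :=
  Set.ncard {f : Filling | IsCIT J f ∧ IsStandardF f ∧ coA J f = C}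

/-! ### The colored quasisymmetric functions `QSym_A` -/

/-- A (normal form of a) monomial in the partially commutative variables `x_{a,i}`:
a pair consisting of the list of words `(w_1, …, w_m)` and the list of (strictly
increasing, positive) second indices `(j_1 < … < j_m)`, representing
`x_{w_1,j_1} ⋯ x_{w_m,j_m}`. -/
abbrev Mono (A : Type*) := List (List A) × List ℕ

/-- A colored quasisymmetric "series": a formal linear combination of monomials,
recorded by its coefficient function.  `QSym_A` itself is the span of the colored
monomial functions `MQ I` inside this space. -/
abbrev QSymA (A : Type*) := Mono A → ℚ

/-- Validity of a monomial normal form: words and indices match up, the indices are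
strictly increasing positive integers, and all words are nonempty. -/
def ValidMono (m : Mono A) : Prop :=
  m.1.length = m.2.length ∧ m.2.Chain' (· < ·) ∧ (∀ j ∈ m.2, 1 ≤ j) ∧ ∀ w ∈ m.1, w ≠ []

open Classical in
/-- The colored monomial quasisymmetric function `M_I`: the sum of all monomials
`x_{w_1,j_1} ⋯ x_{w_m,j_m}` with `j_1 < … < j_m`, where `I = (w_1, …, w_m)`. -/
noncomputable def MQ (I : Sentence A) : QSymA A := fun m =>
  if m.1 = I ∧ ValidMono m then 1 else 0

/-- The largest entry of a filling. -/
def maxEntry (f : Filling) : ℕ := f.flatten.foldr max 0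

/-- The monomial `x_T` of a colored immaculate tableau `T = f` of shape `I`:
for `T` of type `B = (u_1, …, u_j)` it is `x_{u_1,1} x_{u_2,2} ⋯ x_{u_j,j}`
(empty words are skipped). -/
def monoOf (I : Sentence A) (f : Filling) : Mono A :=
  let vs := ((List.range (maxEntry f)).map (· + 1)).filter (fun v => !(typeWord I f v).isEmpty)
  (vs.map (typeWord I f), vs)

/-- The colored dual immaculate function `𝔖*_J = Σ_T x_T`, the sum of the monomials of all
colored immaculate tableaux `T` of shape `J` (its coefficient at a monomial `m` is the
number of such tableaux with `x_T = m`). -/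
noncomputable def dualImm (J : Sentence A) : QSymA A := fun m =>
  (Set.ncard {f : Filling | IsCIT J f ∧ monoOf J f = m} : ℚ)

/-- The colored fundamental quasisymmetric function `F_I = Σ_{J ⪯ I} M_J`. -/
noncomputable def FQ (I : Sentence A) : QSymA A :=
  ∑ᶠ J ∈ {J : Sentence A | Refines J I}, MQ J

/-! ### The colored immaculate descent graph -/

/-- Edges of the colored immaculate descent graph: a directed edge from `I` to `J` (`J ≠ I`)
whenever some standard colored immaculate tableau of shape `I` has colored descent
composition `J`. -/
def IsEdge [Inhabited A] (I J : Sentence A) : Prop := J ≠ I ∧ LJC I J ≠ 0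

/-- Directed paths from `I` to `K` in the colored immaculate descent graph, recorded by
their (nonempty) lists of successive vertices; the path `[I]` is the empty path at `I`. -/
def PathsFromTo [Inhabited A] (I K : Sentence A) : Set (List (Sentence A)) :=
  {p | p.head? = some I ∧ p.getLast? = some K ∧ p.Chain' IsEdge}

/-- The signed weight `(-1)^{ℓ(𝒫)} prod(𝒫)` of a directed path `𝒫`:
`ℓ(𝒫)` is its number of edges and `prod(𝒫)` the product of its edge weights `L_{I,J}`. -/
noncomputable def pathWeight [Inhabited A] (p : List (Sentence A)) : ℚ :=
  ((-1 : ℚ)) ^ (p.length - 1) * ((p.zip p.tail).map (fun e => (LJC e.1 e.2 : ℚ))).prod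

/-- `L⁻¹_{I,K} = Σ_𝒫 (-1)^{ℓ(𝒫)} prod(𝒫)`, summed over all directed paths `𝒫`
from `I` to `K` in the colored immaculate descent graph. -/
noncomputable def Linv [Inhabited A] (I K : Sentence A) : ℚ :=
  ∑ᶠ p ∈ PathsFromTo I K, pathWeight p

/-! ### The colored noncommutative symmetric functions `NSym_A` -/

/-- A formal series over the complete homogeneous basis `{H_I}` of `NSym_A`, recorded by its
coefficient function on (weak) sentences.  `NSym_A` itself consists of the finitely
supported elements supported on genuine sentences; see `InNSym`. -/
abbrev NSymA (A : Type*) := Sentence A → ℚ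

/-- Membership in `NSym_A` proper: finitely supported, and supported on genuine sentences. -/
def InNSym (f : NSymA A) : Prop :=
  (Function.support f).Finite ∧ ∀ I, f I ≠ 0 → IsSentence I

open Classical in
/-- The colored complete homogeneous noncommutative symmetric function
`H_I = H_{w_1} ⋯ H_{w_k}`. -/
noncomputable def Hd (I : Sentence A) : NSymA A := fun J => if J = I then 1 else 0

/-- `H_w` for a single word `w`, with `H_∅ = 1`. -/
noncomputable def Hw (w : List A) : NSymA A := if w.isEmpty then Hd [] else Hd [w]

/-- Multiplication in `NSym_A` (the concatenation product, extended to series):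
`H_I · H_J = H_{I ⬝ J}`. -/
def mulN (f g : NSymA A) : NSymA A := fun I =>
  ∑ j ∈ Finset.range (I.length + 1), f (I.take j) * g (I.drop j)

/-- The duality pairing `⟨·,·⟩ : NSym_A × QSym_A → ℚ`, determined by
`⟨H_I, M_J⟩ = δ_{I,J}`: the `M_I`-coefficient of a quasisymmetric function is its
coefficient on the monomial `x_{w_1,1} x_{w_2,2} ⋯ x_{w_k,k}`. -/
noncomputable def pairNQ (G : NSymA A) (F : QSymA A) : ℚ :=
  ∑ᶠ I ∈ {I : Sentence A | IsSentence I}, G I * F (I, List.range' 1 I.length)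

/-- All ways of splitting each word of a list of words into a prefix and a suffix. -/
def splitsOf : List (List A) → List (List (List A) × List (List A))
  | [] => [([], [])]
  | w :: ws =>
      (((splitsOf ws).map (fun p =>
        (List.range (w.length + 1)).map (fun t => (w.take t :: p.1, w.drop t :: p.2))))).flatten

/-- Restriction of a candidate monomial: keep only the nonempty words together with
their indices. -/
def restrictMono (ws : List (List A)) (js : List ℕ) : Mono A :=
  let ps := (ws.zip js).filter (fun p => !p.1.isEmpty)
  (ps.map Prod.fst, ps.map Prod.snd)

/-- The product of colored quasisymmetric series: the coefficient of a monomial in `F·G`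
is the sum, over all ways of writing each of its words as a concatenation of a word of a
monomial of `F` (on the left) and a word of a monomial of `G` (on the right), of the
products of the corresponding coefficients. -/
def mulQ (F G : QSymA A) : QSymA A := fun m =>
  ((splitsOf m.1).map (fun p => F (restrictMono p.1 m.2) * G (restrictMono p.2 m.2))).sum

/-- The right perp operator `M^⊸` of `M ∈ QSym_A`, the linear operator on `NSym_A`
determined by `⟨M^⊸(H), G⟩ = ⟨H, G·M⟩`; explicitly, for the dual bases `{M_I}` and `{H_I}`,
`M^⊸(H) = Σ_I ⟨H, M_I · M⟩ H_I`. -/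
noncomputable def rperp (M : QSymA A) (H : NSymA A) : NSymA A :=
  ∑ᶠ I ∈ {I : Sentence A | IsSentence I}, pairNQ H (mulQ (MQ I) M) • Hd I

/-- The colored noncommutative Bernstein operator
`𝔹_v = Σ_u Σ_{Q : w(Q^r) = u} (-1)^{ℓ(Q)} H_{v·u} · (Σ_{S ⪰ Q} M_S^⊸)`,
where `Q` runs over all sentences, `u = w(Q^r)` is the concatenation of the words of `Q`
in reverse order, and `S` runs over all coarsenings of `Q`. -/
noncomputable def Bern (v : List A) (f : NSymA A) : NSymA A :=
  ∑ᶠ Q ∈ {Q : Sentence A | IsSentence Q},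
    ((-1 : ℚ)) ^ Q.length •
      mulN (Hw (v ++ Q.reverse.flatten))
        (∑ᶠ S ∈ {S : Sentence A | Refines Q S}, rperp (MQ S) f)

/-- The colored immaculate function `𝔖_J = 𝔹_{v_1} 𝔹_{v_2} ⋯ 𝔹_{v_h}(1)`. -/
noncomputable def ImmS (J : Sentence A) : NSymA A := J.foldr Bern (Hd [])

/-- The colored ribbon function `R_I = Σ_{J ⪰ I} (-1)^{ℓ(J) - ℓ(I)} H_J`. -/
noncomputable def Rib (I : Sentence A) : NSymA A :=
  ∑ᶠ J ∈ {J : Sentence A | Refines I J}, ((-1 : ℚ)) ^ (I.length - J.length) • Hd J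

/-- The Pieri relation `J ⊂_w K` for a sentence `J = (v_1, …, v_h)` and a word `w`:
`K = (u_1, …, u_g)` with `h ≤ g ≤ h+1` (setting `v_{h+1} = ∅`) and `u_j = v_j · q_j`
for words `q_j` (possibly empty) whose reversed concatenation `q_g ⋯ q_1` equals `w`. -/
def PieriRel (J : Sentence A) (w : List A) (K : Sentence A) : Prop :=
  J.length ≤ K.length ∧ K.length ≤ J.length + 1 ∧
  ∃ q : List (List A), q.length = K.length ∧ q.reverse.flatten = w ∧
    ∀ j < K.length, K.getD j [] = J.getD j [] ++ q.getD j []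

/-- Right containment of a weak sentence `K` in `J`: same length, and each word of `K` is a
suffix of the corresponding word of `J`. -/
def RightContained (K J : Sentence A) : Prop :=
  K.length = J.length ∧ ∀ i < J.length, (K.getD i []).IsSuffix (J.getD i [])

/-- The weak sentence `J/_R K`: remove each word of `K` from the right end of the
corresponding word of `J`. -/
def rightQuot (J K : Sentence A) : Sentence A :=
  List.zipWith (fun v u => v.take (v.length - u.length)) J K

/-- Left containment `J ⊆_L I`: `ℓ(J) ≤ ℓ(I)` and each word of `J` is a prefix of the
corresponding word of `I`. -/
def LeftContained (J I : Sentence A) : Prop :=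
  J.length ≤ I.length ∧ ∀ i < J.length, (J.getD i []).IsPrefix (I.getD i [])

/-- A skew colored immaculate tableau of shape `I/J`: a filling of the active boxes
(the `i`-th row keeps the last `|w_i| - |v_i|` boxes) with positive integers, rows weakly
increasing left to right, and the entries in the (active part of the) first column of `I`
strictly increasing top to bottom. -/
def IsSkewCIT (I J : Sentence A) (f : Filling) : Prop :=
  f.map List.length =
    (List.range I.length).map (fun i => (I.getD i []).length - (J.getD i []).length) ∧
  (∀ row ∈ f, row.Chain' (· ≤ ·)) ∧
  ((List.range I.length).filterMap
    (fun i => if (J.getD i []).length = 0 then (f.getD i []).head? else none)).Chain' (· < ·) ∧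
  (∀ x ∈ f.flatten, 1 ≤ x)

/-- The word of the type of a skew tableau at value `v`: the colors of the active boxes with
entry `v`, read left to right, bottom to top. -/
def skewTypeWord (I J : Sentence A) (f : Filling) (v : ℕ) : List A :=
  (((List.range I.length).reverse).map (fun i =>
    rowWith ((I.getD i []).drop (J.getD i []).length) (f.getD i []) v)).flatten

/-- `SkewHasType I J f K` : the skew tableau `f` of shape `I/J` has type `K`. -/
def SkewHasType (I J : Sentence A) (f : Filling) (K : Sentence A) : Prop :=
  ∀ v, 1 ≤ v → skewTypeWord I J f v = K.getD (v - 1) []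

/-! ### The complement involution `ψ` and the row-strict functions -/

/-- The complement `I^c` of a sentence: the unique sentence with the same maximal word
that splits exactly where `I` does not. -/
def complSent (I : Sentence A) : Sentence A :=
  let w := I.flatten
  let n := w.length
  if n = 0 then []
  else
    let splits := (((wl I).scanl (· + ·) 0).drop 1).dropLast
    let csplits := (List.range' 1 (n - 1)).filter (fun i => !(splits.contains i))
    splitByComp w (compOf csplits n)

/-- The `M_I`-coefficient of a colored quasisymmetric function. -/
noncomputable def coeffM (G : QSymA A) (I : Sentence A) : ℚ := G (I, List.range' 1 I.length)

/-- The image of `M_I` under `ψ`, via `M_I = Σ_{J ⪯ I} (-1)^{ℓ(J)-ℓ(I)} F_J` and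
`ψ(F_J) = F_{J^c}`. -/
noncomputable def psiM (I : Sentence A) : QSymA A :=
  ∑ᶠ J ∈ {J : Sentence A | Refines J I}, ((-1 : ℚ)) ^ (J.length - I.length) • FQ (complSent J)

/-- The linear involution `ψ` of `QSym_A`, determined by `ψ(F_I) = F_{I^c}`. -/
noncomputable def psiQ (G : QSymA A) : QSymA A :=
  ∑ᶠ I ∈ {I : Sentence A | IsSentence I}, coeffM G I • psiM I

/-- A colored row-strict immaculate tableau of shape `I`: entries strictly increase left to
right along each row and weakly increase top to bottom down the first column. -/
def IsCRSIT (I : Sentence A) (f : Filling) : Prop :=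
  f.map List.length = I.map List.length ∧
  (∀ row ∈ f, row.Chain' (· < ·)) ∧
  (f.filterMap List.head?).Chain' (· ≤ ·) ∧
  (∀ x ∈ f.flatten, 1 ≤ x)

/-- The word of the type of a row-strict tableau at value `v`: the colors of the boxes with
entry `v`, read left to right, top to bottom. -/
def rsTypeWord (I : Sentence A) (f : Filling) (v : ℕ) : List A :=
  ((I.zip f).map (fun p => rowWith p.1 p.2 v)).flatten

/-- The monomial `x_T` of a colored row-strict immaculate tableau. -/
def rsMonoOf (I : Sentence A) (f : Filling) : Mono A :=
  let vs := ((List.range (maxEntry f)).map (· + 1)).filter (fun v => !(rsTypeWord I f v).isEmpty)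
  (vs.map (rsTypeWord I f), vs)

/-- The colored row-strict dual immaculate function `ℛ𝔖*_J = Σ_T x_T`, summed over all
colored row-strict immaculate tableaux `T` of shape `J`. -/
noncomputable def rsDualImm (J : Sentence A) : QSymA A := fun m =>
  (Set.ncard {f : Filling | IsCRSIT J f ∧ rsMonoOf J f = m} : ℚ)

/-- `α ⪰ β` in the reverse lexicographic order on compositions: at the first index where
they differ, `α` has the *smaller* entry (padding with zeros). -/
def RevLexGE (α β : List ℕ) : Prop :=
  α = β ∨ ∃ i, (∀ j < i, α.getD j 0 = β.getD j 0) ∧ α.getD i 0 < β.getD i 0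

/-! ### Uncolored (ordinary) versions, for `QSym` -/

namespace Uncolored

/-- A composition: a list of positive integers. -/
def IsComposition (α : List ℕ) : Prop := ∀ a ∈ α, 1 ≤ a

/-- `β ⪯ α`: the composition `α` is obtained by summing adjacent parts of `β`. -/
def RefinesC (β α : List ℕ) : Prop :=
  ∃ P : List (List ℕ), (∀ p ∈ P, p ≠ []) ∧ P.flatten = β ∧ P.map List.sum = α

/-- A monomial `x_{i_1}^{a_1} ⋯ x_{i_m}^{a_m}` recorded by its exponents and its
strictly increasing positive indices. -/
abbrev MonoU := List ℕ × List ℕ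

/-- A quasisymmetric "series", recorded by its coefficient function on monomials.
`QSym` is the span of the monomial functions `MU α` inside this space. -/
abbrev QSymU := MonoU → ℚ

/-- Validity of a monomial: matching lengths, strictly increasing positive indices,
positive exponents. -/
def ValidMonoU (m : MonoU) : Prop :=
  m.1.length = m.2.length ∧ m.2.Chain' (· < ·) ∧ (∀ j ∈ m.2, 1 ≤ j) ∧ ∀ a ∈ m.1, 1 ≤ a

open Classical in
/-- The monomial quasisymmetric function `M_α`. -/
noncomputable def MU (α : List ℕ) : QSymU := fun m =>
  if m.1 = α ∧ ValidMonoU m then 1 else 0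

/-- The fundamental quasisymmetric function `F_α = Σ_{β ⪯ α} M_β`. -/
noncomputable def FU (α : List ℕ) : QSymU :=
  ∑ᶠ β ∈ {β : List ℕ | RefinesC β α}, MU β

/-- An immaculate tableau of shape `α`: positive integer entries, rows weakly increasing
left to right, first column strictly increasing top to bottom. -/
def IsIT (α : List ℕ) (f : Filling) : Prop :=
  f.map List.length = α ∧
  (∀ row ∈ f, row.Chain' (· ≤ ·)) ∧
  (f.filterMap List.head?).Chain' (· < ·) ∧
  (∀ x ∈ f.flatten, 1 ≤ x)

/-- The number of boxes of `f` with entry `v`. -/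
def countOf (f : Filling) (v : ℕ) : ℕ := (f.flatten.filter (fun x => x == v)).length

/-- The monomial `x^T` of an immaculate tableau `T` of type `β`:
`x_1^{β_1} ⋯ x_h^{β_h}` (zero exponents skipped). -/
def monoOfU (f : Filling) : MonoU :=
  let vs := ((List.range (maxEntry f)).map (· + 1)).filter (fun v => decide (countOf f v ≠ 0))
  (vs.map (countOf f), vs)

/-- The dual immaculate function `𝔖*_α = Σ_T x^T`, summed over all immaculate tableaux
of shape `α`. -/
noncomputable def dualImmU (α : List ℕ) : QSymU := fun m =>
  (Set.ncard {f : Filling | IsIT α f ∧ monoOfU f = m} : ℚ)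

/-- The descent composition `co(U)` of a standard immaculate tableau. -/
def descComp (f : Filling) : List ℕ :=
  if nBoxes f = 0 then [] else compOf (descList f) (nBoxes f)

/-- `L_{α,β}`: the number of standard immaculate tableaux of shape `α` with descent
composition `β`. -/
noncomputable def LU (α β : List ℕ) : ℕ :=
  Set.ncard {f : Filling | IsIT α f ∧ IsStandardF f ∧ descComp f = β}

/-- Edges of the immaculate descent graph `𝔇^n`. -/
def IsEdgeU (α β : List ℕ) : Prop := β ≠ α ∧ LU α β ≠ 0

/-- Directed paths from `α` to `β` in the immaculate descent graph, recorded by their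
lists of successive vertices; `[α]` is the empty path at `α`. -/
def PathsU (α β : List ℕ) : Set (List (List ℕ)) :=
  {p | p.head? = some α ∧ p.getLast? = some β ∧ p.Chain' IsEdgeU}

/-- The signed weight `(-1)^{ℓ(𝒫)} prod(𝒫)` of a path. -/
noncomputable def pathWeightU (p : List (List ℕ)) : ℚ :=
  ((-1 : ℚ)) ^ (p.length - 1) * ((p.zip p.tail).map (fun e => (LU e.1 e.2 : ℚ))).prod

/-- `L⁻¹_{α,β} = Σ_𝒫 (-1)^{ℓ(𝒫)} prod(𝒫)`, over directed paths from `α` to `β` in `𝔇^n`. -/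
noncomputable def LinvU (α β : List ℕ) : ℚ :=
  ∑ᶠ p ∈ PathsU α β, pathWeightU p

end Uncolored

end ColoredImm

namespace ColoredImm

/-! In a tableau whose shape `J` is a sentence, the entries of the `i`-th row are at least `i`,
because they are bounded below by the first column. Hence the boxes with entry at most `p` lie in
the first `p` rows: if the tableau has type `C`, then `wl J` dominates `wl C`, with equality only
if every row `i` is constantly `i`, which forces `C = J`. A composition that dominates another one
cannot be strictly larger in the reverse lexicographic order, whence the first claim. For the
basis claim, relabelling entries shows that the coefficients of `dualImm J` depend only on the
words of a monomial, so that `dualImm J` is `∑ C, K_{J,C} M_C`. This sum is finite and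
unitriangular for the dominance order, which is made well-founded by adding up the partial sums.
-/

section Compositions

/-- Dominance order on compositions: every partial sum of `α` is at least the corresponding one
of `β`, a composition being padded with zeros. -/
def Dominates (α β : List ℕ) : Prop :=
  ∀ p, (β.take p).sum ≤ (α.take p).sum

/-- The total of the first `n` partial sums of a composition of `n`, a statistic which is strictly
monotone for the dominance order. -/
def partialSumTotal (α : List ℕ) : ℕ :=
  ∑ p ∈ Finset.range α.sum, (α.take p).sum

lemma sum_take_succ_getD (α : List ℕ) (i : ℕ) :
    (α.take (i + 1)).sum = (α.take i).sum + α.getD i 0 := by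
  by_cases hi : i < α.length
  · rw [List.sum_take_succ α i hi, List.getD_eq_getElem _ _ hi]
  · rw [not_lt] at hi
    rw [List.take_of_length_le hi, List.take_of_length_le (by omega), List.getD_eq_default _ _ hi,
      add_zero]

lemma sum_take_congr {α β : List ℕ} {i : ℕ} (h : ∀ j < i, α.getD j 0 = β.getD j 0) :
    (α.take i).sum = (β.take i).sum := by
  induction i with
  | zero => simp
  | succ i ih =>
    rw [sum_take_succ_getD, sum_take_succ_getD, ih fun j hj => h j (by omega), h i (by omega)]

lemma getD_congr_of_sum_take_eq {α β : List ℕ} (h : ∀ p, (α.take p).sum = (β.take p).sum)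
    (i : ℕ) : α.getD i 0 = β.getD i 0 := by
  have := h (i + 1)
  rw [sum_take_succ_getD, sum_take_succ_getD, h i] at this
  omega

lemma Dominates.eq_of_revLexGE {α β : List ℕ} (hdom : Dominates α β) (hlex : RevLexGE α β) :
    α = β := by
  obtain h | ⟨i, heq, hlt⟩ := hlex
  · exact h
  · have hle := hdom (i + 1)
    rw [sum_take_succ_getD, sum_take_succ_getD, sum_take_congr heq] at hle
    omega

lemma length_le_sum_of_zero_notMem {α : List ℕ} (hα : 0 ∉ α) : α.length ≤ α.sum := by
  simpa using List.card_nsmul_le_sum α 1 fun a ha =>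
    Nat.one_le_iff_ne_zero.2 (ne_of_mem_of_not_mem ha hα)

lemma length_le_of_getD_eq {α β : List ℕ} (hα : 0 ∉ α) (h : ∀ i, α.getD i 0 = β.getD i 0) :
    α.length ≤ β.length := by
  by_contra! hlt
  refine hα ?_
  have := h β.length
  rw [List.getD_eq_getElem _ _ hlt, List.getD_eq_default _ _ le_rfl] at this
  exact this ▸ List.getElem_mem hlt

lemma eq_of_sum_take_eq {α β : List ℕ} (hα : 0 ∉ α) (hβ : 0 ∉ β)
    (h : ∀ p, (α.take p).sum = (β.take p).sum) : α = β := by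
  have hget := getD_congr_of_sum_take_eq h
  refine List.ext_getElem (le_antisymm (length_le_of_getD_eq hα hget)
    (length_le_of_getD_eq hβ fun i => (hget i).symm)) fun i hi hi' => ?_
  simpa [List.getD_eq_getElem, hi, hi'] using hget i

lemma Dominates.partialSumTotal_lt {α β : List ℕ} (hdom : Dominates α β) (hsum : α.sum = β.sum)
    (hα : 0 ∉ α) (hβ : 0 ∉ β) (hne : α ≠ β) : partialSumTotal β < partialSumTotal α := by
  unfold partialSumTotal
  rw [← hsum]
  refine Finset.sum_lt_sum (fun p _ => hdom p) ?_
  by_contra! hle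
  refine hne (eq_of_sum_take_eq hα hβ fun p => ?_)
  obtain hp | hp := lt_or_ge p α.sum
  · exact le_antisymm (hle p (Finset.mem_range.2 hp)) (hdom p)
  · rw [List.take_of_length_le ((length_le_sum_of_zero_notMem hα).trans hp),
      List.take_of_length_le ((length_le_sum_of_zero_notMem hβ).trans (hsum ▸ hp)), hsum]

end Compositions

section Unitriangular

variable {ι R M α : Type*} [Ring R] [AddCommGroup M] [Module R M] {b : ι → M} {c : ι → ι →₀ R}
  {r : ι → α}

lemma linearIndependent_finsupp_of_unitriangular [LinearOrder α] (hdiag : ∀ i, c i i = 1)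
    (htri : ∀ i j, c i j ≠ 0 → j ≠ i → r j < r i) : LinearIndependent R c := by
  rw [linearIndependent_iff]
  intro l hl
  by_contra hne
  obtain ⟨i, hi, hmax⟩ := l.support.exists_max_image r (Finsupp.support_nonempty_iff.2 hne)
  refine Finsupp.mem_support_iff.1 hi ?_
  calc l i = ∑ j ∈ l.support, l j * c j i := by
        rw [Finset.sum_eq_single_of_mem i hi, hdiag, mul_one]
        intro j hj hji
        by_contra hji0
        exact (hmax j hj).not_gt (htri j i (right_ne_zero_of_mul hji0) hji.symm)
    _ = Finsupp.linearCombination R c l i := by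
        simp [Finsupp.linearCombination_apply, Finsupp.sum, Finsupp.finsetSum_apply]
    _ = 0 := by rw [hl, Finsupp.zero_apply]

lemma linearIndependent_of_unitriangular [LinearOrder α] (hb : LinearIndependent R b)
    (hdiag : ∀ i, c i i = 1) (htri : ∀ i j, c i j ≠ 0 → j ≠ i → r j < r i) :
    LinearIndependent R fun i => Finsupp.linearCombination R b (c i) :=
  (linearIndependent_finsupp_of_unitriangular hdiag htri).map' _ (LinearMap.ker_eq_bot.2 hb)

lemma span_eq_of_unitriangular [Preorder α] [WellFoundedLT α] (hdiag : ∀ i, c i i = 1)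
    (htri : ∀ i j, c i j ≠ 0 → j ≠ i → r j < r i) :
    Submodule.span R (Set.range fun i => Finsupp.linearCombination R b (c i)) =
      Submodule.span R (Set.range b) := by
  refine le_antisymm (Submodule.span_le.2 ?_) (Submodule.span_le.2 ?_)
  · rintro _ ⟨i, rfl⟩
    rw [← Finsupp.range_linearCombination]
    exact LinearMap.mem_range_self _ (c i)
  · classical
    rintro _ ⟨i, rfl⟩
    induction i using (InvImage.wf r wellFounded_lt).induction with
    | _ i ih =>
    have hsplit : b i = Finsupp.linearCombination R b (c i) -
        Finsupp.linearCombination R b ((c i).erase i) := by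
      nth_rw 1 [← Finsupp.single_add_erase i (c i)]
      simp [hdiag]
    rw [hsplit]
    refine sub_mem (Submodule.subset_span (Set.mem_range_self i)) (Submodule.sum_mem _ ?_)
    intro j hj
    rw [Finsupp.support_erase, Finset.mem_erase] at hj
    exact Submodule.smul_mem _ _ (ih j (htri i j (Finsupp.mem_support_iff.1 hj.2) hj.1))

end Unitriangular

section TypeWords

variable {A : Type*}

lemma typeWord_cons (w : List A) (J : Sentence A) (row : List ℕ) (f : Filling) (v : ℕ) :
    typeWord (w :: J) (row :: f) v = typeWord J f v ++ rowWith w row v := by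
  simp [typeWord]

lemma length_rowWith {w : List A} {row : List ℕ} (h : row.length = w.length) (v : ℕ) :
    (rowWith w row v).length = row.count v := by
  rw [rowWith, List.length_map, ← List.countP_eq_length_filter, List.count]
  conv_rhs => rw [← List.map_snd_zip h.le, List.countP_map]
  rfl

lemma length_typeWord {J : Sentence A} {f : Filling}
    (h : f.map List.length = J.map List.length) (v : ℕ) :
    (typeWord J f v).length = f.flatten.count v := by
  induction J generalizing f with
  | nil => simp_all [typeWord]
  | cons w J ih =>
    cases f with
    | nil => simp at h
    | cons row f =>
      rw [List.map_cons, List.map_cons, List.cons.injEq] at h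
      rw [typeWord_cons, List.length_append, ih h.2, length_rowWith h.1, List.flatten_cons,
        List.count_append, add_comm]

lemma typeWord_eq_nil_iff {J : Sentence A} {f : Filling}
    (h : f.map List.length = J.map List.length) {v : ℕ} :
    typeWord J f v = [] ↔ v ∉ f.flatten := by
  rw [← List.length_eq_zero_iff, length_typeWord h, List.count_eq_zero]

lemma rowWith_replicate (w : List A) (x v : ℕ) :
    rowWith w (List.replicate w.length x) v = if x = v then w else [] := by
  have hsnd : ∀ p ∈ w.zip (List.replicate w.length x), p.2 = x := fun p hp =>
    List.eq_of_mem_replicate (List.of_mem_zip hp).2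
  rw [rowWith]
  split_ifs with h
  · rw [List.filter_eq_self.2 fun p hp => beq_iff_eq.2 ((hsnd p hp).trans h),
      List.map_fst_zip (List.length_replicate ..).ge]
  · rw [List.filter_eq_nil_iff.2 fun p hp hv => h ((hsnd p hp).symm.trans (beq_iff_eq.1 hv)),
      List.map_nil]

lemma rowWith_map {σ : ℕ → ℕ} {row : List ℕ} {v : ℕ} (hσ : ∀ x ∈ row, σ x = σ v → x = v)
    (w : List A) : rowWith w (row.map σ) (σ v) = rowWith w row v := by
  rw [rowWith, rowWith, List.zip_map_right, List.filter_map, List.map_map]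
  congr 1
  refine List.filter_congr fun p hp => ?_
  simpa using ⟨hσ p.2 (List.of_mem_zip hp).2, congrArg σ⟩

lemma typeWord_map {σ : ℕ → ℕ} {f : Filling} {v : ℕ} (hσ : ∀ x ∈ f.flatten, σ x = σ v → x = v)
    (J : Sentence A) : typeWord J (f.map (List.map σ)) (σ v) = typeWord J f v := by
  rw [typeWord, typeWord, List.zip_map_right, ← List.map_reverse, List.map_map]
  congr 1
  refine List.map_congr_left fun p hp => rowWith_map (fun x hx => hσ x ?_) p.1
  exact List.mem_flatten_of_mem (List.of_mem_zip (List.mem_reverse.1 hp)).2 hx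

lemma map_length_mapIdx_replicate (J : Sentence A) (g : ℕ → ℕ) :
    (J.mapIdx fun i w => List.replicate w.length (g i)).map List.length = J.map List.length :=
  List.ext_getElem (by simp) fun i _ _ => by simp

lemma typeWord_mapIdx_replicate (J : Sentence A) {g : ℕ → ℕ} (hg : Function.Injective g) (n : ℕ) :
    typeWord J (J.mapIdx fun i w => List.replicate w.length (g i)) (g n) = J.getD n [] := by
  induction J generalizing g n with
  | nil => simp [typeWord]
  | cons w J ih =>
    rw [List.mapIdx_cons, typeWord_cons, rowWith_replicate]
    cases n with
    | zero =>
      have hnil :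
          typeWord J (J.mapIdx fun i w => List.replicate w.length (g (i + 1))) (g 0) = [] := by
        rw [typeWord_eq_nil_iff (map_length_mapIdx_replicate J fun i => g (i + 1))]
        simp [List.mem_mapIdx, hg.eq_iff]
      simp [hnil]
    | succ n =>
      rw [if_neg (hg.ne n.succ_ne_zero.symm), List.append_nil,
        List.getD_cons_succ]
      exact ih (hg.comp (add_left_injective 1)) n

end TypeWords

section Tableaux

variable {A : Type*} {J C : Sentence A} {f : Filling}

lemma IsCIT.length_eq (hf : IsCIT J f) : f.length = J.length := by
  simpa using congrArg List.length hf.1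

lemma IsCIT.length_getElem (hf : IsCIT J f) {i : ℕ} (hi : i < f.length) :
    f[i].length = (J[i]'(hf.length_eq ▸ hi)).length := by
  simpa [hi, hf.length_eq ▸ hi] using congrArg (·[i]?) hf.1

lemma IsSentence.zero_notMem_wl (hJ : IsSentence J) : 0 ∉ wl J := fun h0 => by
  obtain ⟨w, hw, hlen⟩ := List.mem_map.1 h0
  exact hJ w hw (List.length_eq_zero_iff.1 hlen)

lemma IsCIT.head_lt_head (hf : IsCIT J f) {i j : ℕ} (hij : i < j) (hj : j < f.length)
    (hi0 : f[i] ≠ []) (hj0 : f[j] ≠ []) : f[i].head hi0 < f[j].head hj0 := by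
  have hheads := List.isChain_iff_pairwise.1 hf.2.2.1
  rw [List.pairwise_filterMap, List.pairwise_iff_getElem] at hheads
  exact hheads i j (hij.trans hj) hj hij _ (List.head?_eq_some_head hi0) _
    (List.head?_eq_some_head hj0)

lemma IsCIT.head_le_of_mem (hf : IsCIT J f) {row : List ℕ} (hrow : row ∈ f) {x : ℕ}
    (hx : x ∈ row) : row.head (List.ne_nil_of_mem hx) ≤ x :=
  (List.isChain_iff_pairwise.1 (hf.2.1 row hrow)).rel_head hx

lemma IsCIT.lt_of_mem_getElem (hJ : IsSentence J) (hf : IsCIT J f) {i : ℕ} (hi : i < f.length)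
    {x : ℕ} (hx : x ∈ f[i]) : i < x := by
  induction i generalizing x with
  | zero => exact hf.2.2.2 x (List.mem_flatten_of_mem (List.getElem_mem hi) hx)
  | succ i ih =>
    have hne : f[i] ≠ [] := by
      rw [← List.length_pos_iff, hf.length_getElem, List.length_pos_iff]
      exact hJ _ (List.getElem_mem _)
    calc i + 1 ≤ f[i].head hne := ih _ (List.head_mem hne)
      _ < f[i + 1].head (List.ne_nil_of_mem hx) := hf.head_lt_head i.lt_succ_self hi _ _
      _ ≤ x := hf.head_le_of_mem (List.getElem_mem hi) hx

lemma IsCIT.countP_le_eq_countP_take (hJ : IsSentence J) (hf : IsCIT J f) (p : ℕ) :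
    f.flatten.countP (· ≤ p) = (f.take p).flatten.countP (· ≤ p) := by
  have hdrop : (f.drop p).flatten.countP (· ≤ p) = 0 := by
    rw [List.countP_eq_zero]
    intro x hx
    obtain ⟨row, hrow, hxrow⟩ := List.mem_flatten.1 hx
    obtain ⟨i, hi, rfl⟩ := List.getElem_of_mem hrow
    rw [List.getElem_drop] at hxrow
    have := hf.lt_of_mem_getElem hJ _ hxrow
    simp only [decide_eq_true_eq]
    omega
  rw [← List.take_append_drop p f, List.flatten_append, List.countP_append,
    List.take_append_drop, hdrop, add_zero]

lemma IsCIT.length_flatten_take (hf : IsCIT J f) (p : ℕ) :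
    (f.take p).flatten.length = ((wl J).take p).sum := by
  rw [List.length_flatten, List.map_take, hf.1, wl]

lemma countP_le_succ (l : List ℕ) (p : ℕ) :
    l.countP (· ≤ p + 1) = l.countP (· ≤ p) + l.count (p + 1) := by
  induction l with
  | nil => simp
  | cons x l ih => grind

lemma HasType.countP_le_eq (hC : HasType J f C) (hf : IsCIT J f) (p : ℕ) :
    f.flatten.countP (· ≤ p) = ((wl C).take p).sum := by
  induction p with
  | zero =>
    rw [List.take_zero, List.sum_nil, List.countP_eq_zero]
    intro x hx
    have := hf.2.2.2 x hx
    simp only [decide_eq_true_eq]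
    omega
  | succ p ih =>
    have hcount : f.flatten.count (p + 1) = (wl C).getD p 0 := by
      rw [← length_typeWord hf.1, hC (p + 1) p.succ_pos, wl, Nat.add_sub_cancel,
        ← List.length_nil (α := A), List.getD_map]
    rw [sum_take_succ_getD, ← ih, ← hcount, countP_le_succ]

lemma dominates_of_hasType (hJ : IsSentence J) (hf : IsCIT J f) (hC : HasType J f C) :
    Dominates (wl J) (wl C) := fun p => by
  rw [← hC.countP_le_eq hf, hf.countP_le_eq_countP_take hJ, ← hf.length_flatten_take]
  exact List.countP_le_length

lemma le_maxEntry {x : ℕ} (hx : x ∈ f.flatten) : x ≤ maxEntry f :=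
  List.le_max_of_le hx le_rfl

lemma HasType.size_eq (hC : HasType J f C) (hf : IsCIT J f) : size J = size C := by
  set p := max C.length (maxEntry f)
  have hle : ∀ x ∈ f.flatten, decide (x ≤ p) = true := fun x hx =>
    decide_eq_true ((le_maxEntry hx).trans (le_max_right _ _))
  have hcount := hC.countP_le_eq hf p
  rwa [List.countP_eq_length.2 hle, List.length_flatten, hf.1,
    List.take_of_length_le (by simp [wl, p])] at hcount

/-- The tableau of shape `J` whose `i`-th row (counted from `1`) is constantly `i`; it is the unique
colored immaculate tableau of type `J`. -/
def rowFilling (J : Sentence A) : Filling :=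
  J.mapIdx fun i w => List.replicate w.length (i + 1)

lemma hasType_rowFilling (J : Sentence A) : HasType J (rowFilling J) J := fun v hv => by
  obtain ⟨n, rfl⟩ := Nat.exists_eq_add_of_le' hv
  exact typeWord_mapIdx_replicate J (add_left_injective 1) n

lemma isCIT_rowFilling (J : Sentence A) : IsCIT J (rowFilling J) := by
  refine ⟨map_length_mapIdx_replicate J _, fun row hrow => ?_, ?_, fun x hx => ?_⟩
  · obtain ⟨i, hi, rfl⟩ := List.mem_mapIdx.1 hrow
    exact List.isChain_replicate_of_rel _ le_rfl
  · refine List.isChain_iff_pairwise.2 (List.pairwise_filterMap.2 ?_)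
    refine List.pairwise_iff_getElem.2 fun i j hi hj hij a ha b hb => ?_
    have ha' := List.mem_of_head? ha
    have hb' := List.mem_of_head? hb
    simp only [rowFilling, List.getElem_mapIdx, List.mem_replicate] at ha' hb'
    omega
  · obtain ⟨row, hrow, hx⟩ := List.mem_flatten.1 hx
    obtain ⟨i, hi, rfl⟩ := List.mem_mapIdx.1 hrow
    exact (List.eq_of_mem_replicate hx).symm ▸ Nat.succ_pos i

lemma eq_rowFilling_of_wl_eq (hJ : IsSentence J) (hf : IsCIT J f) (hC : HasType J f C)
    (hwl : wl J = wl C) : f = rowFilling J := by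
  refine List.ext_getElem (by simp [rowFilling, hf.length_eq]) fun i hi hi' => ?_
  have hall : (f.take (i + 1)).flatten.countP (· ≤ i + 1) = (f.take (i + 1)).flatten.length := by
    rw [← hf.countP_le_eq_countP_take hJ, hC.countP_le_eq hf, hf.length_flatten_take, hwl]
  simp only [rowFilling, List.getElem_mapIdx]
  refine List.eq_replicate_iff.2 ⟨hf.length_getElem hi, fun x hx => ?_⟩
  refine le_antisymm ?_ (hf.lt_of_mem_getElem hJ hi hx)
  refine of_decide_eq_true (List.countP_eq_length.1 hall x ?_)
  exact List.mem_flatten_of_mem (List.mem_take_iff_getElem.2 ⟨i, by omega, rfl⟩) hx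

lemma eq_of_hasType_of_wl_eq (hJ : IsSentence J) (hf : IsCIT J f) (hC : HasType J f C)
    (hwl : wl J = wl C) : J = C := by
  have hlen : J.length = C.length := by simpa [wl] using congrArg List.length hwl
  refine List.ext_getElem hlen fun i hi hi' => ?_
  have hJi := hasType_rowFilling J (i + 1) i.succ_pos
  rw [← eq_rowFilling_of_wl_eq hJ hf hC hwl, hC (i + 1) i.succ_pos, Nat.add_sub_cancel,
    List.getD_eq_getElem _ _ hi, List.getD_eq_getElem _ _ hi'] at hJi
  exact hJi.symm

lemma exists_of_KJB_ne_zero (h : KJB J C ≠ 0) : ∃ f, IsCIT J f ∧ HasType J f C :=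
  Set.nonempty_of_ncard_ne_zero h

lemma eq_of_revLexGE_of_KJB_ne_zero (hJ : IsSentence J) (hlex : RevLexGE (wl J) (wl C))
    (hK : KJB J C ≠ 0) : J = C := by
  obtain ⟨f, hf, hC⟩ := exists_of_KJB_ne_zero hK
  exact eq_of_hasType_of_wl_eq hJ hf hC ((dominates_of_hasType hJ hf hC).eq_of_revLexGE hlex)

lemma KJB_self (hJ : IsSentence J) : KJB J J = 1 := by
  refine Set.ncard_eq_one.2 ⟨rowFilling J, Set.eq_singleton_iff_unique_mem.2 ⟨?_, ?_⟩⟩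
  · exact ⟨isCIT_rowFilling J, hasType_rowFilling J⟩
  · rintro f ⟨hf, hfJ⟩
    exact eq_rowFilling_of_wl_eq hJ hf hfJ rfl

lemma partialSumTotal_lt_of_KJB_ne_zero (hJ : IsSentence J) (hC : IsSentence C)
    (hK : KJB J C ≠ 0) (hne : C ≠ J) : partialSumTotal (wl C) < partialSumTotal (wl J) := by
  obtain ⟨f, hf, hfC⟩ := exists_of_KJB_ne_zero hK
  exact (dominates_of_hasType hJ hf hfC).partialSumTotal_lt (hfC.size_eq hf) hJ.zero_notMem_wl
    hC.zero_notMem_wl fun hwl => hne (eq_of_hasType_of_wl_eq hJ hf hfC hwl).symm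

end Tableaux

section Monomials

variable {A : Type*} {J C : Sentence A} {f : Filling} {σ : ℕ → ℕ}

lemma IsCIT.mem_monoOf_snd (hf : IsCIT J f) {v : ℕ} : v ∈ (monoOf J f).2 ↔ v ∈ f.flatten := by
  simp only [monoOf, List.mem_filter, List.mem_map, List.mem_range, Bool.not_eq_true',
    List.isEmpty_eq_false_iff, ne_eq, typeWord_eq_nil_iff hf.1, not_not, and_iff_right_iff_imp]
  intro hv
  exact ⟨v - 1, by have := le_maxEntry hv; have := hf.2.2.2 v hv; omega,
    Nat.sub_add_cancel (hf.2.2.2 v hv)⟩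

lemma sortedLT_monoOf_snd (J : Sentence A) (f : Filling) : (monoOf J f).2.SortedLT := by
  refine List.sortedLT_iff_pairwise.2 (List.Pairwise.filter _ ?_)
  exact List.pairwise_map.2 (List.pairwise_lt_range.imp Nat.succ_lt_succ)

lemma IsCIT.monoOf_eq_iff (hf : IsCIT J f) {m : Mono A} :
    monoOf J f = m ↔
      m.2.SortedLT ∧ (∀ v, v ∈ m.2 ↔ v ∈ f.flatten) ∧ m.1 = m.2.map (typeWord J f) := by
  constructor
  · rintro rfl
    exact ⟨sortedLT_monoOf_snd J f, fun v => hf.mem_monoOf_snd, rfl⟩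
  · rintro ⟨hsorted, hmem, hwords⟩
    have hsnd : (monoOf J f).2 = m.2 := (sortedLT_monoOf_snd J f).eq_of_mem_iff hsorted
      fun v => hf.mem_monoOf_snd.trans (hmem v).symm
    refine Prod.ext ?_ hsnd
    rw [hwords, ← hsnd]
    rfl

lemma IsCIT.validMono_monoOf (hf : IsCIT J f) : ValidMono (monoOf J f) := by
  refine ⟨List.length_map _, (sortedLT_monoOf_snd J f).isChain, fun v hv => ?_, fun w hw => ?_⟩
  · exact hf.2.2.2 v (hf.mem_monoOf_snd.1 hv)
  · obtain ⟨v, hv, rfl⟩ := List.mem_map.1 hw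
    rw [ne_eq, typeWord_eq_nil_iff hf.1, not_not]
    exact hf.mem_monoOf_snd.1 hv

lemma hasType_iff_monoOf_eq (hf : IsCIT J f) (hC : IsSentence C) :
    HasType J f C ↔ monoOf J f = (C, List.range' 1 C.length) := by
  rw [hf.monoOf_eq_iff]
  constructor
  · intro h
    refine ⟨List.sortedLT_iff_pairwise.2 List.pairwise_lt_range', fun v => ?_, ?_⟩
    · obtain rfl | hv := Nat.eq_zero_or_pos v
      · exact iff_of_false (by simp) fun h0 => Nat.not_succ_le_zero 0 (hf.2.2.2 0 h0)
      · rw [← not_iff_not, ← typeWord_eq_nil_iff hf.1, h v hv, List.mem_range'_1]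
        obtain hlt | hle := lt_or_ge (v - 1) C.length
        · rw [List.getD_eq_getElem _ _ hlt]
          exact iff_of_false (by omega) (hC _ (List.getElem_mem hlt))
        · rw [List.getD_eq_default _ _ hle]
          exact iff_of_true (by omega) rfl
    · refine List.ext_getElem (by simp) fun i hi _ => ?_
      simp [h (1 + i) (by omega), hi]
  · rintro ⟨-, hmem, hwords⟩ v hv
    dsimp only at hmem hwords
    obtain hlt | hle := lt_or_ge (v - 1) C.length
    · have hword : typeWord J f v = C[v - 1] := by
        rw [List.getElem_of_eq hwords]
        simp [Nat.add_sub_cancel' hv]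
      rw [hword, List.getD_eq_getElem _ _ hlt]
    · rw [List.getD_eq_default _ _ hle, typeWord_eq_nil_iff hf.1, ← hmem, List.mem_range'_1]
      omega

lemma KJB_eq_dualImm (J : Sentence A) (hC : IsSentence C) :
    (KJB J C : ℚ) = dualImm J (C, List.range' 1 C.length) := by
  have hset : {f | IsCIT J f ∧ HasType J f C} =
      {f | IsCIT J f ∧ monoOf J f = (C, List.range' 1 C.length)} :=
    Set.ext fun f => and_congr_right fun hf => hasType_iff_monoOf_eq hf hC
  rw [KJB, hset, dualImm]

lemma IsCIT.map (hf : IsCIT J f) (hσ : StrictMonoOn σ {x | x ∈ f.flatten})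
    (hpos : ∀ x ∈ f.flatten, 1 ≤ σ x) : IsCIT J (f.map (List.map σ)) := by
  obtain ⟨hshape, hrows, hheads, -⟩ := hf
  refine ⟨by simpa [Function.comp_def] using hshape, fun row' hrow' => ?_, ?_, fun x hx => ?_⟩
  · obtain ⟨row, hrow, rfl⟩ := List.mem_map.1 hrow'
    refine List.isChain_iff_pairwise.2 (List.pairwise_map.2 ?_)
    refine (List.isChain_iff_pairwise.1 (hrows row hrow)).imp_of_mem fun hx hy hxy => ?_
    exact hσ.monotoneOn (List.mem_flatten_of_mem hrow hx) (List.mem_flatten_of_mem hrow hy) hxy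
  · have hmem : ∀ {x}, x ∈ f.filterMap List.head? → x ∈ f.flatten := fun hx => by
      obtain ⟨row, hrow, hx⟩ := List.mem_filterMap.1 hx
      exact List.mem_flatten_of_mem hrow (List.mem_of_head? hx)
    have hmap : (f.map (List.map σ)).filterMap List.head? = (f.filterMap List.head?).map σ := by
      rw [List.filterMap_map, List.map_filterMap]
      exact congrArg (List.filterMap · f) (funext fun row => List.head?_map)
    rw [hmap]
    refine List.isChain_iff_pairwise.2 (List.pairwise_map.2 ?_)
    exact (List.isChain_iff_pairwise.1 hheads).imp_of_mem fun hx hy => hσ (hmem hx) (hmem hy)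
  · rw [← List.map_flatten] at hx
    obtain ⟨y, hy, rfl⟩ := List.mem_map.1 hx
    exact hpos y hy

lemma IsCIT.monoOf_map (hf : IsCIT J f) (hσ : StrictMonoOn σ {x | x ∈ f.flatten})
    (hpos : ∀ x ∈ f.flatten, 1 ≤ σ x) :
    monoOf J (f.map (List.map σ)) = ((monoOf J f).1, (monoOf J f).2.map σ) := by
  rw [(hf.map hσ hpos).monoOf_eq_iff]
  refine ⟨List.sortedLT_iff_pairwise.2 (List.pairwise_map.2 ?_), fun v => ?_, ?_⟩
  · exact (sortedLT_monoOf_snd J f).pairwise.imp_of_mem fun hx hy =>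
      hσ (hf.mem_monoOf_snd.1 hx) (hf.mem_monoOf_snd.1 hy)
  · simp only [← List.map_flatten, List.mem_map, hf.mem_monoOf_snd]
  · rw [List.map_map]
    refine List.map_congr_left fun v hv => (typeWord_map (fun x hx => ?_) J).symm
    exact hσ.injOn hx (hf.mem_monoOf_snd.1 hv)

lemma exists_strictMonoOn_map_eq {α β : Type*} [LinearOrder α] [Preorder β] [Nonempty β]
    {l : List α} {l' : List β} (hl : l.SortedLT) (hl' : l'.SortedLT)
    (hlen : l.length = l'.length) : ∃ σ : α → β, StrictMonoOn σ {x | x ∈ l} ∧ l.map σ = l' := by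
  set σ : α → β := fun x => l'.getD (l.idxOf x) (Classical.arbitrary β)
  have hσ : ∀ (i : ℕ) (hi : i < l.length), σ l[i] = l'[i] := fun i hi => by
    simp only [σ, hl.nodup.idxOf_getElem i hi, List.getD_eq_getElem _ _ (hlen ▸ hi)]
  refine ⟨σ, fun x hx y hy hxy => ?_, List.ext_getElem (by simp [hlen]) fun i hi hi' => ?_⟩
  · obtain ⟨i, hi, rfl⟩ := List.getElem_of_mem hx
    obtain ⟨j, hj, rfl⟩ := List.getElem_of_mem hy
    rw [hσ, hσ]
    exact hl'.getElem_lt_getElem_of_lt ((hl.getElem_lt_getElem_iff).1 hxy)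
  · rw [List.getElem_map, hσ]

end Monomials

section Quasisymmetry

variable {A : Type*} {J C : Sentence A}

lemma finite_list_of_length_eq_of_forall_mem {α : Type*} {S : Set α} (hS : S.Finite) (n : ℕ) :
    {l : List α | l.length = n ∧ ∀ x ∈ l, x ∈ S}.Finite := by
  have := hS.to_subtype
  refine ((List.finite_length_eq S n).image (List.map Subtype.val)).subset ?_
  rintro l ⟨hlen, hmem⟩
  lift l to List S using hmem
  exact ⟨l, by simpa using hlen, rfl⟩

lemma finite_fillings_of_shape {α : Type*} {S : Set α} (hS : S.Finite) (L : List ℕ) :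
    {f : List (List α) | f.map List.length = L ∧ ∀ x ∈ f.flatten, x ∈ S}.Finite := by
  refine Set.Finite.of_injOn (f := List.flatten) (fun f hf => ?_) (fun f hf g hg hfg => ?_)
    (finite_list_of_length_eq_of_forall_mem hS L.sum)
  · exact ⟨by rw [List.length_flatten, hf.1], hf.2⟩
  · exact List.eq_iff_flatten_eq.2 ⟨hfg, hf.1.trans hg.1.symm⟩

lemma finite_setOf_monoOf_eq (J : Sentence A) (m : Mono A) :
    {f | IsCIT J f ∧ monoOf J f = m}.Finite := by
  refine (finite_fillings_of_shape m.2.finite_toSet (J.map List.length)).subset ?_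
  rintro f ⟨hf, rfl⟩
  exact ⟨hf.1, fun x hx => hf.mem_monoOf_snd.2 hx⟩

lemma injOn_map_map {α β : Type*} [Nonempty α] {σ : α → β} {S : Set α} (hσ : Set.InjOn σ S) :
    Set.InjOn (List.map (List.map σ)) {f | ∀ x ∈ f.flatten, x ∈ S} := by
  refine Set.LeftInvOn.injOn (f₁' := List.map (List.map (Function.invFunOn σ S))) fun f hf => ?_
  rw [List.map_map]
  refine (List.map_congr_left fun row hrow => ?_).trans (List.map_id f)
  rw [Function.comp_apply, List.map_map]
  refine (List.map_congr_left fun x hx => ?_).trans (List.map_id row)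
  exact hσ.leftInvOn_invFunOn (hf x (List.mem_flatten_of_mem hrow hx))

lemma ValidMono.sortedLT {m : Mono A} (hm : ValidMono m) : m.2.SortedLT :=
  List.IsChain.sortedLT hm.2.1

lemma ncard_monoOf_eq_le {js js' : List ℕ} (hjs : ValidMono (C, js)) (hjs' : ValidMono (C, js')) :
    {f | IsCIT J f ∧ monoOf J f = (C, js)}.ncard ≤
      {f | IsCIT J f ∧ monoOf J f = (C, js')}.ncard := by
  obtain ⟨σ, hσ, rfl⟩ :=
    exists_strictMonoOn_map_eq hjs.sortedLT hjs'.sortedLT (hjs.1.symm.trans hjs'.1)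
  have hmem : ∀ {f}, IsCIT J f → monoOf J f = (C, js) → ∀ x ∈ f.flatten, x ∈ js :=
    fun hf hm x hx => by simpa [hm] using hf.mem_monoOf_snd.2 hx
  refine Set.ncard_le_ncard_of_injOn (List.map (List.map σ)) ?_ ?_ (finite_setOf_monoOf_eq J _)
  · rintro f ⟨hf, hm⟩
    have hσf : StrictMonoOn σ {x | x ∈ f.flatten} := hσ.mono (hmem hf hm)
    have hpos : ∀ x ∈ f.flatten, 1 ≤ σ x := fun x hx =>
      hjs'.2.2.1 _ (List.mem_map_of_mem (hmem hf hm x hx))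
    exact ⟨hf.map hσf hpos, by rw [hf.monoOf_map hσf hpos, hm]⟩
  · exact (injOn_map_map hσ.injOn).mono fun f hf => hmem hf.1 hf.2

lemma dualImm_eq_of_validMono (J : Sentence A) {js js' : List ℕ} (hjs : ValidMono (C, js))
    (hjs' : ValidMono (C, js')) : dualImm J (C, js) = dualImm J (C, js') :=
  congrArg Nat.cast ((ncard_monoOf_eq_le hjs hjs').antisymm (ncard_monoOf_eq_le hjs' hjs))

lemma dualImm_eq_zero_of_not_validMono (J : Sentence A) {m : Mono A} (hm : ¬ValidMono m) :
    dualImm J m = 0 := by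
  have hempty : {f | IsCIT J f ∧ monoOf J f = m} = ∅ := by
    refine Set.eq_empty_of_forall_notMem ?_
    rintro f ⟨hf, rfl⟩
    exact hm hf.validMono_monoOf
  rw [dualImm, hempty, Set.ncard_empty, Nat.cast_zero]

lemma validMono_range' (hC : IsSentence C) : ValidMono (C, List.range' 1 C.length) :=
  ⟨List.length_range'.symm, List.isChain_iff_pairwise.2 List.pairwise_lt_range',
    fun _ hj => (List.mem_range'_1.1 hj).1, hC⟩

lemma dualImm_apply_of_validMono (J : Sentence A) {m : Mono A} (hm : ValidMono m) :
    dualImm J m = KJB J m.1 := by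
  rw [KJB_eq_dualImm J hm.2.2.2]
  exact dualImm_eq_of_validMono J hm (validMono_range' hm.2.2.2)

lemma length_le_size (hC : IsSentence C) : C.length ≤ size C := by
  simpa [wl, size] using length_le_sum_of_zero_notMem hC.zero_notMem_wl

lemma finite_setOf_KJB_ne_zero (J : Sentence A) :
    {C : {I : Sentence A // IsSentence I} | KJB J C ≠ 0}.Finite := by
  have hfin := (finite_fillings_of_shape (Set.finite_Iic (size J)) (J.map List.length)).image
    fun f => (monoOf J f).1
  refine (hfin.preimage Subtype.val_injective.injOn).subset ?_
  rintro ⟨C, hC⟩ hK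
  obtain ⟨f, hf, hfC⟩ := exists_of_KJB_ne_zero hK
  have hmono := (hasType_iff_monoOf_eq hf hC).1 hfC
  refine ⟨f, ⟨hf.1, fun x hx => ?_⟩, congrArg Prod.fst hmono⟩
  have hxC := hf.mem_monoOf_snd.2 hx
  rw [hmono, List.mem_range'_1] at hxC
  have hlen := length_le_size hC
  rw [← hfC.size_eq hf] at hlen
  exact Set.mem_Iic.2 (by omega)

end Quasisymmetry

section Basis

variable {A : Type*}

/-- Row `J` of the transition matrix from the colored dual immaculate functions to the colored
monomial functions, as a finitely supported vector indexed by sentences. -/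
noncomputable def transitionRow (J : Sentence A) : {I : Sentence A // IsSentence I} →₀ ℚ :=
  .ofSupportFinite (fun C => KJB J C) <| by
    simpa [Function.support] using finite_setOf_KJB_ne_zero J

lemma transitionRow_apply (J : Sentence A) (C : {I : Sentence A // IsSentence I}) :
    transitionRow J C = KJB J C :=
  rfl

lemma linearCombination_MQ_apply (l : {I : Sentence A // IsSentence I} →₀ ℚ) {m : Mono A}
    (hm : ValidMono m) :
    Finsupp.linearCombination ℚ (fun I : {I : Sentence A // IsSentence I} => MQ I.1) l m =
      l ⟨m.1, hm.2.2.2⟩ := by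
  rw [Finsupp.linearCombination_apply, Finsupp.sum, Finset.sum_apply,
    Finset.sum_eq_single ⟨m.1, hm.2.2.2⟩]
  · simp [MQ, hm]
  · intro I _ hne
    have hI : m.1 ≠ I.1 := fun h => hne (Subtype.ext h.symm)
    simp [MQ, hI]
  · intro hnot
    rw [Finsupp.notMem_support_iff.1 hnot, zero_smul, Pi.zero_apply]

lemma linearCombination_MQ_apply_of_not_validMono (l : {I : Sentence A // IsSentence I} →₀ ℚ)
    {m : Mono A} (hm : ¬ValidMono m) :
    Finsupp.linearCombination ℚ (fun I : {I : Sentence A // IsSentence I} => MQ I.1) l m = 0 := by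
  simp [Finsupp.linearCombination_apply, Finsupp.sum, MQ, hm]

lemma linearIndependent_MQ :
    LinearIndependent ℚ fun I : {I : Sentence A // IsSentence I} => MQ I.1 := by
  refine linearIndependent_iff.2 fun l hl => Finsupp.ext fun C => ?_
  rw [← linearCombination_MQ_apply l (validMono_range' C.2), hl]
  rfl

lemma dualImm_eq_linearCombination (J : Sentence A) :
    dualImm J = Finsupp.linearCombination ℚ (fun I : {I : Sentence A // IsSentence I} => MQ I.1)
      (transitionRow J) := by
  ext m
  by_cases hm : ValidMono m
  · rw [dualImm_apply_of_validMono J hm, linearCombination_MQ_apply _ hm, transitionRow_apply]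
  · rw [dualImm_eq_zero_of_not_validMono J hm, linearCombination_MQ_apply_of_not_validMono _ hm]

lemma transitionRow_self (J : {I : Sentence A // IsSentence I}) : transitionRow J.1 J = 1 := by
  rw [transitionRow_apply, KJB_self J.2, Nat.cast_one]

lemma partialSumTotal_lt_of_transitionRow_ne_zero (J C : {I : Sentence A // IsSentence I})
    (h : transitionRow J.1 C ≠ 0) (hne : C ≠ J) :
    partialSumTotal (wl C.1) < partialSumTotal (wl J.1) :=
  partialSumTotal_lt_of_KJB_ne_zero J.2 C.2 (by simpa [transitionRow_apply] using h)
    (Subtype.coe_ne_coe.2 hne)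

end Basis

theorem statement4_general {A : Type*} :
    (∀ J C : Sentence A, IsSentence J → RevLexGE (wl J) (wl C) → KJB J C ≠ 0 → J = C) ∧
    (∀ J : Sentence A, IsSentence J → KJB J J = 1) ∧
    LinearIndependent ℚ (fun J : {I : Sentence A // IsSentence I} => dualImm J.1) ∧
    Submodule.span ℚ (Set.range (fun J : {I : Sentence A // IsSentence I} => dualImm J.1)) =
      Submodule.span ℚ (Set.range (fun J : {I : Sentence A // IsSentence I} => MQ J.1)) := by
  simp_rw [dualImm_eq_linearCombination]
  exact ⟨fun J C => eq_of_revLexGE_of_KJB_ne_zero,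
    fun J => KJB_self,
    linearIndependent_of_unitriangular linearIndependent_MQ transitionRow_self
      partialSumTotal_lt_of_transitionRow_ne_zero,
    span_eq_of_unitriangular transitionRow_self partialSumTotal_lt_of_transitionRow_ne_zero⟩

/-- Over a totally ordered alphabet: if `J, C` are sentences of equal size
with `wℓ(J) ⪰ wℓ(C)` in reverse lexicographic order and `K_{J,C} ≠ 0`, then `J = C`;
moreover `K_{J,J} = 1`.  Consequently the transition matrix from the colored dual
immaculate functions to the colored monomial functions is upper unitriangular, and the
colored dual immaculate functions form a basis of `QSym_A` (they are linearly independent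
and span the same subspace as the colored monomial functions). -/
theorem statement4 {A : Type*} [LinearOrder A] :
    (∀ J C : Sentence A, IsSentence J → IsSentence C → size J = size C →
        RevLexGE (wl J) (wl C) → KJB J C ≠ 0 → J = C) ∧
    (∀ J : Sentence A, IsSentence J → KJB J J = 1) ∧
    LinearIndependent ℚ (fun J : {I : Sentence A // IsSentence I} => dualImm J.1) ∧
    Submodule.span ℚ (Set.range (fun J : {I : Sentence A // IsSentence I} => dualImm J.1)) =
      Submodule.span ℚ (Set.range (fun J : {I : Sentence A // IsSentence I} => MQ J.1)) := by
  obtain ⟨htri, hrest⟩ := statement4_general (A := A)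
  exact ⟨fun J C hJ _ _ => htri J C hJ, hrest⟩

end ColoredImm
end

section
/- For all sentences J and B, K_{J,B} = Σ_{C ⪰ B} L_{J,C}, where the sum runs over all sentences C that are coarsenings of B; that is, the number of colored immaculate tableaux of shape J and type B equals the number of standard colored immaculate tableaux of shape J whose colored descent composition is a coarsening of B. -/
open scoped BigOperators

namespace ColoredImm

/-!
Standardization numbers the boxes of a tableau `T` in its type-reading order, giving a standard
tableau `U`. If `T` has type `B`, then the colors of `U` in the order of its entries spell
`B.flatten`, and `T` is recovered from `U` by replacing each entry `v` by the number of the word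
of `B` that contains letter number `v`. Conversely, this relabelling of a standard tableau `U`
whose colors spell `B.flatten` keeps the numbering of the boxes as its reading order exactly when
it strictly increases at every descent of `U`: equal entries are read from bottom to top, so that
`v` and `v + 1` may receive the same label unless `v + 1` lies in a lower row. In other words, each
descent of `U` is the end of a word of `B`, which says that `co_A(U)` is a coarsening of `B`.
-/

section Preliminaries

theorem length_eq_of_map_length_eq {α β : Type*} {l : List (List α)} {l' : List (List β)}
    (h : l.map List.length = l'.map List.length) : l.length = l'.length := by
  simpa using congrArg List.length h

theorem length_getD_eq_of_map_length_eq {α β : Type*} {l : List (List α)} {l' : List (List β)}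
    (h : l.map List.length = l'.map List.length) (r : ℕ) :
    (l.getD r []).length = (l'.getD r []).length := calc
  (l.getD r []).length = (l.map List.length).getD r 0 := (List.getD_map (d := []) ..).symm
  _ = (l'.map List.length).getD r 0 := by rw [h]
  _ = (l'.getD r []).length := List.getD_map (d := []) ..

theorem map_range_getD {α : Type*} (l : List α) (d : α) :
    (List.range l.length).map (l.getD · d) = l :=
  List.ext_getElem (by simp) fun i _ hi => by simp [hi]

theorem zip_eq_map_range_getD {α β : Type*} {l : List α} {l' : List β}
    (h : l'.length = l.length) (a : α) (b : β) :
    l.zip l' = (List.range l'.length).map fun i => (l.getD i a, l'.getD i b) := by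
  refine List.ext_getElem (by simp [h]) fun i hi hi' => ?_
  simp only [List.length_zip, lt_min_iff] at hi
  simp [hi.1, hi.2]

theorem eq_filter_beq_append_filter_bne {α β : Type*} [PartialOrder β] [DecidableEq β]
    {l : List (α × β)} {s : β} (hsorted : l.Pairwise (·.2 ≤ ·.2))
    (hl : ∀ p ∈ l, s ≤ p.2) : l = l.filter (·.2 == s) ++ l.filter (·.2 != s) := by
  induction l with
  | nil => rfl
  | cons p l ih =>
    obtain ⟨hp, hsorted⟩ := List.pairwise_cons.1 hsorted
    have hl' := ih hsorted fun q hq => hl q (.tail _ hq)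
    rcases (hl p (.head _)).eq_or_lt with rfl | hlt
    · simpa using hl'
    · have hgt : ∀ q ∈ p :: l, s < q.2 :=
        List.forall_mem_cons.2 ⟨hlt, fun q hq => hlt.trans_le (hp q hq)⟩
      rw [List.filter_eq_nil_iff.2 fun q hq => by simpa using (hgt q hq).ne',
        List.filter_eq_self.2 fun q hq => by simpa using (hgt q hq).ne', List.nil_append]

theorem length_filter_lt_lt_iff {α β : Type*} [LinearOrder β] {l : List α} (κ : α → β)
    {a a' : α} (ha : a ∈ l) :
    (l.filter (κ · < κ a)).length < (l.filter (κ · < κ a')).length ↔ κ a < κ a' := by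
  have hsub {x y : β} (hxy : x ≤ y) : (l.filter (κ · < x)).Sublist (l.filter (κ · < y)) :=
    List.monotone_filter_right l fun z hz => by simpa using (of_decide_eq_true hz).trans_le hxy
  refine ⟨fun h => not_le.1 fun hle => h.not_ge (hsub hle).length_le, fun h => ?_⟩
  refine (hsub h.le).length_le.lt_of_ne fun heq => ?_
  have hmem : a ∈ l.filter (κ · < κ a) := by
    rw [(hsub h.le).eq_of_length heq]
    simp [ha, h]
  simp at hmem

theorem finsum_mem_ncard_fiber {α β : Type*} {S : Set α} (hS : S.Finite) (g : α → β)
    (R : Set β) : ∑ᶠ c ∈ R, {a | a ∈ S ∧ g a = c}.ncard = {a | a ∈ S ∧ g a ∈ R}.ncard := by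
  have hsupport : ∀ c ∈ Function.support fun c => {a | a ∈ S ∧ g a = c}.ncard,
      (c ∈ R ↔ c ∈ R ∩ g '' S) :=
    fun c hc => (and_iff_left (Set.nonempty_of_ncard_ne_zero hc)).symm
  have hdisjoint : (R ∩ g '' S).PairwiseDisjoint fun c => {a | a ∈ S ∧ g a = c} :=
    fun c _ c' _ hne => Set.disjoint_left.2 fun a ha ha' => hne (ha.2.symm.trans ha'.2)
  have hfinite : (R ∩ g '' S).Finite := (hS.image g).subset Set.inter_subset_right
  rw [finsum_mem_inter_support_eq' _ _ _ hsupport,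
    ← hfinite.ncard_biUnion (fun c _ => hS.subset fun _ ha => ha.1) hdisjoint]
  congr 1
  ext a
  simp only [Set.mem_iUnion, Set.mem_ofPred_eq, exists_prop]
  constructor
  · rintro ⟨_, ⟨hR, -⟩, ha, rfl⟩
    exact ⟨ha, hR⟩
  · rintro ⟨ha, hR⟩
    exact ⟨g a, ⟨hR, a, ha, rfl⟩, ha, rfl⟩

end Preliminaries

section Breaks

variable {A : Type*} {B B₁ B₂ C : Sentence A} {w : List A}

/-- `IsBreak B d`: some word of the weak sentence `B` ends (or `B` begins) after exactly `d`
letters. -/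
def IsBreak (B : Sentence A) (d : ℕ) : Prop :=
  ∃ B₁ B₂ : Sentence A, B = B₁ ++ B₂ ∧ B₁.flatten.length = d

theorem isBreak_zero (B : Sentence A) : IsBreak B 0 := ⟨[], B, rfl, rfl⟩

theorem isBreak_length_flatten (B : Sentence A) : IsBreak B B.flatten.length :=
  ⟨B, [], B.append_nil.symm, rfl⟩

theorem isBreak_nil {d : ℕ} : IsBreak ([] : Sentence A) d ↔ d = 0 := by
  constructor
  · rintro ⟨B₁, B₂, h, rfl⟩
    simp only [(List.append_eq_nil_iff.1 h.symm).1, List.flatten_nil, List.length_nil]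
  · rintro rfl
    exact isBreak_zero _

theorem isBreak_append {e : ℕ} :
    IsBreak (B₁ ++ B₂) (B₁.flatten.length + e) ↔ IsBreak B₂ e := by
  constructor
  · rintro ⟨C₁, C₂, h, hlen⟩
    rcases List.append_eq_append_iff.1 h with ⟨D, rfl, rfl⟩ | ⟨D, rfl, rfl⟩
    · exact ⟨D, C₂, rfl, by simpa using hlen⟩
    · obtain rfl : e = 0 := by
        simp only [List.flatten_append, List.length_append] at hlen
        lia
      exact isBreak_zero _
  · rintro ⟨C₁, C₂, rfl, rfl⟩
    exact ⟨B₁ ++ C₁, C₂, (List.append_assoc ..).symm, by simp⟩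

theorem isBreak_cons {d : ℕ} :
    IsBreak (w :: B) d ↔ d = 0 ∨ ∃ e, IsBreak B e ∧ d = w.length + e := by
  constructor
  · rintro ⟨C₁, C₂, h, rfl⟩
    rcases List.cons_eq_append_iff.1 h with ⟨rfl, rfl⟩ | ⟨D, rfl, rfl⟩
    · exact .inl rfl
    · exact .inr ⟨D.flatten.length, ⟨D, C₂, rfl, rfl⟩, by simp⟩
  · rintro (rfl | ⟨e, he, rfl⟩)
    · exact isBreak_zero _
    · simpa using isBreak_append (B₁ := [w]).2 he

theorem Refines.flatten_eq (h : Refines B C) : B.flatten = C.flatten := by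
  obtain ⟨P, -, rfl, rfl⟩ := h
  exact List.flatten_flatten

theorem Refines.isBreak (h : Refines B C) {d : ℕ} (hd : IsBreak C d) : IsBreak B d := by
  obtain ⟨P, -, rfl, rfl⟩ := h
  obtain ⟨C₁, C₂, hC, rfl⟩ := hd
  obtain ⟨P₁, P₂, rfl, rfl, rfl⟩ := List.map_eq_append_iff.1 hC
  exact ⟨P₁.flatten, P₂.flatten, List.flatten_append, by rw [List.flatten_flatten]⟩

theorem refines_singleton_flatten (hB : B ≠ []) : Refines B [B.flatten] :=
  ⟨[B], by simpa using hB, by simp, by simp⟩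

theorem Refines.append_cons (h : Refines B₂ C) (hB₁ : B₁ ≠ []) :
    Refines (B₁ ++ B₂) (B₁.flatten :: C) := by
  obtain ⟨P, hP, rfl, rfl⟩ := h
  exact ⟨B₁ :: P, by simpa [hB₁] using hP, rfl, rfl⟩

theorem refines_cons_of_isBreak (hC : IsSentence (w :: C)) (hflat : B.flatten = w ++ C.flatten)
    (hbreak : ∀ d, IsBreak (w :: C) d → IsBreak B d) : Refines B (w :: C) := by
  induction C generalizing w B with
  | nil =>
    have hB : B ≠ [] := by
      rintro rfl
      exact hC w (by simp) (by simpa using hflat.symm)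
    simpa [hflat] using refines_singleton_flatten hB
  | cons w' C ih =>
    obtain ⟨B₁, B₂, rfl, hlen⟩ :=
      hbreak w.length (isBreak_cons.2 (.inr ⟨0, isBreak_zero _, rfl⟩))
    rw [List.flatten_append] at hflat
    obtain ⟨rfl, hflat₂⟩ := List.append_inj hflat hlen
    have hB₁ : B₁ ≠ [] := by
      rintro rfl
      exact hC [] (by simp) rfl
    refine (ih (fun v hv => hC v (.tail _ hv)) hflat₂ fun d hd => ?_).append_cons hB₁
    exact isBreak_append.1 (hbreak _ (isBreak_cons.2 (.inr ⟨d, hd, rfl⟩)))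

theorem refines_iff_isBreak (hB : B.flatten = [] → B = []) (hC : IsSentence C) :
    Refines B C ↔ B.flatten = C.flatten ∧ ∀ d, IsBreak C d → IsBreak B d := by
  refine ⟨fun h => ⟨h.flatten_eq, fun _ => h.isBreak⟩, fun ⟨hflat, hbreak⟩ => ?_⟩
  cases C with
  | nil =>
    rw [hB hflat]
    exact ⟨[], by simp, rfl, rfl⟩
  | cons w C => exact refines_cons_of_isBreak hC hflat hbreak

/-- The number of the word of `B` that contains the letter number `v` of `B.flatten`, with words
and letters both counted from `1`; it is `B.length + 1` when there are fewer than `v` letters. -/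
def wordNumber : Sentence A → ℕ → ℕ
  | [], _ => 1
  | w :: B, v => if v ≤ w.length then 1 else wordNumber B (v - w.length) + 1

theorem one_le_wordNumber (B : Sentence A) (v : ℕ) : 1 ≤ wordNumber B v := by
  cases B <;> grind [wordNumber]

theorem wordNumber_cons_length_add {v : ℕ} (hv : 1 ≤ v) :
    wordNumber (w :: B) (w.length + v) = wordNumber B v + 1 := by
  grind [wordNumber]

theorem wordNumber_mono (B : Sentence A) : Monotone (wordNumber B) := by
  induction B with
  | nil => exact fun _ _ _ => le_rfl
  | cons w B ih =>
    intro v v' hv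
    have := ih (Nat.sub_le_sub_right hv w.length)
    grind [wordNumber]

theorem isBreak_iff_wordNumber_lt {d : ℕ} (hd : 1 ≤ d) :
    IsBreak B d ↔ wordNumber B d < wordNumber B (d + 1) := by
  induction B generalizing d with
  | nil => simp [isBreak_nil, wordNumber, Nat.one_le_iff_ne_zero.1 hd]
  | cons w B ih =>
    simp only [isBreak_cons, wordNumber, Nat.one_le_iff_ne_zero.1 hd, false_or]
    rcases lt_trichotomy d w.length with h | rfl | h
    · simp only [h.le, Nat.succ_le_of_lt h, if_true, lt_irrefl, iff_false]
      rintro ⟨e, -, he⟩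
      lia
    · simp only [le_rfl, Nat.not_succ_le_self, if_true, if_false, Nat.lt_add_left_iff_pos,
        one_le_wordNumber, Nat.lt_of_succ_le, iff_true]
      exact ⟨0, isBreak_zero B, rfl⟩
    · obtain ⟨e, rfl⟩ := Nat.exists_eq_add_of_le h.le
      have he : 1 ≤ e := by lia
      have h' : ¬ w.length + (e + 1) ≤ w.length := by lia
      simp only [add_assoc, Nat.add_left_cancel_iff, h.not_ge, h', if_false,
        Nat.add_sub_cancel_left, add_lt_add_iff_right, exists_eq_right', ih he]

end Breaks

section Splitting

variable {A : Type*} {w : List A} {a n : ℕ} {ds : List ℕ}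

theorem flatten_splitByComp (w : List A) (c : List ℕ) :
    (splitByComp w c).flatten = w.take c.sum := by
  induction c generalizing w with
  | nil => simp [splitByComp]
  | cons a c ih => simp [splitByComp, ih, List.take_add]

theorem map_length_splitByComp {c : List ℕ} (h : c.sum ≤ w.length) :
    (splitByComp w c).map List.length = c := by
  induction c generalizing w with
  | nil => rfl
  | cons a c ih =>
    rw [List.sum_cons] at h
    rw [splitByComp, List.map_cons, ih (by rw [List.length_drop]; lia), List.length_take]
    congr 1
    lia

theorem isSentence_splitByComp {c : List ℕ} (h : c.sum ≤ w.length) (hc : 0 ∉ c) :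
    IsSentence (splitByComp w c) := by
  rintro v hv rfl
  rw [← map_length_splitByComp h] at hc
  exact hc (List.mem_map.2 ⟨[], hv, rfl⟩)

theorem sum_gaps (h : (a :: (ds ++ [n])).Pairwise (· < ·)) :
    (List.zipWith (fun x y => y - x) (a :: ds) (ds ++ [n])).sum = n - a := by
  induction ds generalizing a with
  | nil => simp
  | cons d ds ih =>
    obtain ⟨had, hds⟩ := List.pairwise_cons.1 h
    have hd : a < d := had d (by simp)
    have hn : d < n := (List.pairwise_cons.1 hds).1 n (by simp)
    rw [List.cons_append, List.zipWith_cons_cons, List.sum_cons, ih hds]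
    lia

theorem zero_notMem_gaps (h : (a :: (ds ++ [n])).Pairwise (· < ·)) :
    0 ∉ List.zipWith (fun x y => y - x) (a :: ds) (ds ++ [n]) := by
  induction ds generalizing a with
  | nil => simpa [Nat.sub_eq_zero_iff_le, eq_comm] using h
  | cons d ds ih =>
    obtain ⟨had, hds⟩ := List.pairwise_cons.1 h
    have hd : a < d := had d (by simp)
    simpa [eq_comm, Nat.sub_eq_zero_iff_le, hd] using ih hds

theorem isBreak_splitByComp_gaps (h : (a :: (ds ++ [n])).Pairwise (· < ·))
    (hw : w.length = n - a) {e : ℕ} :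
    IsBreak (splitByComp w (List.zipWith (fun x y => y - x) (a :: ds) (ds ++ [n]))) e ↔
      e = 0 ∨ a + e ∈ ds ++ [n] := by
  induction ds generalizing a w e with
  | nil =>
    have hn : a < n := by simpa using h
    simp only [List.nil_append, List.zipWith_cons_cons, List.zipWith_nil_right, splitByComp,
      isBreak_cons, isBreak_nil, exists_eq_left, List.length_take, List.mem_singleton]
    lia
  | cons d ds ih =>
    obtain ⟨had, hds⟩ := List.pairwise_cons.1 h
    have hd : a < d := had d (by simp)
    have hgt : ∀ x ∈ ds ++ [n], d < x := (List.pairwise_cons.1 hds).1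
    have hn : d < n := hgt n (by simp)
    simp only [List.cons_append, List.zipWith_cons_cons, splitByComp, isBreak_cons,
      ih hds (w := w.drop (d - a)) (by rw [List.length_drop]; lia), List.length_take,
      List.mem_cons]
    refine or_congr_right ⟨?_, ?_⟩
    · rintro ⟨e', rfl | he', rfl⟩
      · left; lia
      · right; convert he' using 1; lia
    · rintro (he | he)
      · exact ⟨0, .inl rfl, by lia⟩
      · have := hgt _ he
        exact ⟨a + e - d, .inr (by convert he using 1; lia), by lia⟩

end Splitting

section DescentComposition

variable {A : Type*} [Inhabited A] {J B : Sentence A} {f : Filling}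

theorem length_readWord (J : Sentence A) (f : Filling) :
    (readWord J f).length = nBoxes f := by
  simp [readWord]

theorem mem_descList {d : ℕ} :
    d ∈ descList f ↔ 1 ≤ d ∧ d < nBoxes f ∧ rowOf f d < rowOf f (d + 1) := by
  simp only [descList, List.mem_filter, List.mem_range'_1, decide_eq_true_eq, ← and_assoc]
  refine and_congr_left fun _ => ?_
  lia

theorem pairwise_zero_cons_descList_append (hf : nBoxes f ≠ 0) :
    (0 :: (descList f ++ [nBoxes f])).Pairwise (· < ·) := by
  rw [List.pairwise_cons, List.pairwise_append]
  refine ⟨?_, List.Pairwise.filter _ List.pairwise_lt_range', List.pairwise_singleton .., ?_⟩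
  · intro d hd
    rcases List.mem_append.1 hd with hd | hd
    · exact (mem_descList.1 hd).1
    · rw [List.mem_singleton] at hd
      lia
  · intro d hd n hn
    rw [List.mem_singleton.1 hn]
    exact (mem_descList.1 hd).2.1

theorem flatten_coA (J : Sentence A) (f : Filling) : (coA J f).flatten = readWord J f := by
  rw [coA]
  split_ifs with hf
  · exact (List.length_eq_zero_iff.1 ((length_readWord J f).trans hf)).symm
  · rw [flatten_splitByComp, compOf, sum_gaps (pairwise_zero_cons_descList_append hf), Nat.sub_zero,
      ← length_readWord J f, List.take_length]

theorem isSentence_coA (J : Sentence A) (f : Filling) : IsSentence (coA J f) := by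
  rw [coA]
  split_ifs with hf
  · simp [IsSentence]
  · have hsorted := pairwise_zero_cons_descList_append hf
    refine isSentence_splitByComp ?_ (zero_notMem_gaps hsorted)
    rw [compOf, sum_gaps hsorted, length_readWord, Nat.sub_zero]

theorem isBreak_coA {d : ℕ} :
    IsBreak (coA J f) d ↔ d = 0 ∨ d ∈ descList f ∨ d = nBoxes f := by
  rw [coA]
  split_ifs with hf
  · simp only [isBreak_nil, mem_descList]
    lia
  · rw [compOf, isBreak_splitByComp_gaps (pairwise_zero_cons_descList_append hf)
      (length_readWord J f), zero_add, List.mem_append, List.mem_singleton]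

theorem refines_coA_iff (hB : B.flatten = [] → B = []) :
    Refines B (coA J f) ↔ readWord J f = B.flatten ∧ ∀ d ∈ descList f, IsBreak B d := by
  rw [refines_iff_isBreak hB (isSentence_coA J f), flatten_coA, eq_comm]
  refine and_congr_right fun hread => ⟨fun h d hd => h d (isBreak_coA.2 (.inr (.inl hd))), ?_⟩
  intro h d hd
  rcases isBreak_coA.1 hd with rfl | hd | rfl
  · exact isBreak_zero B
  · exact h d hd
  · rw [← length_readWord J f, hread]
    exact isBreak_length_flatten B

end DescentComposition

section Boxes

variable {f g : Filling} {b : ℕ × ℕ}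

theorem mem_boxes : b ∈ boxes f ↔ b.2 < (f.getD b.1 []).length := by
  obtain ⟨r, j⟩ := b
  have hr : j < (f.getD r []).length → r < f.length := by
    contrapose!
    intro h
    rw [List.getD_eq_default _ _ h]
    exact Nat.zero_le j
  simpa [boxes] using hr

theorem fst_lt_length (hb : b ∈ boxes f) : b.1 < f.length := by
  by_contra h
  have hcol := mem_boxes.1 hb
  rw [List.getD_eq_default _ _ (not_lt.1 h)] at hcol
  exact Nat.not_lt_zero _ hcol

theorem boxes_nodup (f : Filling) : (boxes f).Nodup := by
  refine List.nodup_flatten.2 ⟨?_, ?_⟩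
  · simp only [List.mem_map]
    rintro _ ⟨r, -, rfl⟩
    exact List.nodup_range.map fun j j' h => (Prod.mk.inj h).2
  · refine List.pairwise_map.2 (List.nodup_range.imp fun {r r'} hrr' => ?_)
    simp only [List.disjoint_left, List.mem_map]
    rintro _ ⟨j, -, rfl⟩ ⟨j', -, h⟩
    exact hrr' (Prod.mk.inj h).1.symm

theorem boxes_congr (h : f.map List.length = g.map List.length) : boxes f = boxes g := by
  simp only [boxes, length_eq_of_map_length_eq h, length_getD_eq_of_map_length_eq h]

theorem flatten_eq_map_entryAt (f : Filling) : f.flatten = (boxes f).map (entryAt f) := by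
  conv_lhs => rw [← map_range_getD f []]
  simp only [boxes, List.map_flatten, List.map_map, Function.comp_def, entryAt, map_range_getD]

theorem nBoxes_eq_length_boxes (f : Filling) : nBoxes f = (boxes f).length := by
  rw [nBoxes, flatten_eq_map_entryAt, List.length_map]

theorem entryAt_mem_flatten (hb : b ∈ boxes f) : entryAt f b ∈ f.flatten := by
  rw [flatten_eq_map_entryAt]
  exact List.mem_map_of_mem hb

theorem filling_ext (h : f.map List.length = g.map List.length)
    (hentry : ∀ b ∈ boxes f, entryAt f b = entryAt g b) : f = g := by
  refine List.eq_iff_flatten_eq.2 ⟨?_, h⟩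
  rw [flatten_eq_map_entryAt, flatten_eq_map_entryAt, ← boxes_congr h]
  exact List.map_congr_left hentry

theorem map_length_map_map (φ : ℕ → ℕ) (f : Filling) :
    (f.map (List.map φ)).map List.length = f.map List.length := by
  simp

theorem entryAt_map_map (φ : ℕ → ℕ) (hb : b ∈ boxes f) :
    entryAt (f.map (List.map φ)) b = φ (entryAt f b) := by
  have hcol := mem_boxes.1 hb
  have hrow : (f.map (List.map φ)).getD b.1 [] = (f.getD b.1 []).map φ :=
    List.getD_map (d := []) ..
  rw [entryAt, entryAt, hrow, List.getD_eq_getElem _ _ (by simpa using hcol),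
    List.getD_eq_getElem _ _ hcol, List.getElem_map]

theorem map_length_stdFill (f : Filling) :
    (stdFill f).map List.length = f.map List.length := by
  conv_rhs => rw [← map_range_getD f []]
  simp [stdFill, Function.comp_def]

theorem entryAt_stdFill (hb : b ∈ boxes f) :
    entryAt (stdFill f) b = 1 + ((boxes f).filter (beforeB f · b)).length := by
  have hcol := mem_boxes.1 hb
  have hrow := fst_lt_length hb
  rw [List.getD_eq_getElem _ _ hrow] at hcol
  simp [entryAt, stdFill, hrow, hcol]

end Boxes

section StandardFillings

variable {f U : Filling} {b b' : ℕ × ℕ} {v : ℕ}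

/-- The box holding the value `v` in a standard filling. -/
def posOf (f : Filling) (v : ℕ) : ℕ × ℕ :=
  (rowOf f v, (f.getD (rowOf f v) []).findIdx (· == v))

theorem posOf_mem_boxes_and_entryAt_posOf (hv : v ∈ f.flatten) :
    posOf f v ∈ boxes f ∧ entryAt f (posOf f v) = v := by
  obtain ⟨row, hrow, hv⟩ := List.mem_flatten.1 hv
  have hlt : rowOf f v < f.length := List.findIdx_lt_length.2 ⟨row, hrow, by simpa using hv⟩
  have hv' : v ∈ f.getD (rowOf f v) [] := by
    rw [List.getD_eq_getElem _ _ hlt]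
    exact List.contains_iff_mem.1
      (List.findIdx_getElem (p := fun row : List ℕ => row.contains v) (w := hlt))
  have hcol : (posOf f v).2 < (f.getD (rowOf f v) []).length :=
    List.findIdx_lt_length.2 ⟨v, hv', by simp⟩
  refine ⟨mem_boxes.2 hcol, ?_⟩
  rw [entryAt, show (posOf f v).1 = rowOf f v from rfl, List.getD_eq_getElem _ _ hcol]
  exact beq_iff_eq.1 (List.findIdx_getElem (p := (· == v)) (w := hcol))

theorem IsStandardF.mem_flatten (hU : IsStandardF U) :
    v ∈ U.flatten ↔ 1 ≤ v ∧ v ≤ nBoxes U := by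
  rw [List.Perm.mem_iff hU, List.mem_range'_1]
  lia

theorem IsStandardF.posOf_mem_boxes (hU : IsStandardF U) (hv : 1 ≤ v) (hv' : v ≤ nBoxes U) :
    posOf U v ∈ boxes U :=
  (posOf_mem_boxes_and_entryAt_posOf (hU.mem_flatten.2 ⟨hv, hv'⟩)).1

theorem IsStandardF.entryAt_posOf (hU : IsStandardF U) (hv : 1 ≤ v) (hv' : v ≤ nBoxes U) :
    entryAt U (posOf U v) = v :=
  (posOf_mem_boxes_and_entryAt_posOf (hU.mem_flatten.2 ⟨hv, hv'⟩)).2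

theorem IsStandardF.entryAt_mem_Icc (hU : IsStandardF U) (hb : b ∈ boxes U) :
    entryAt U b ∈ Set.Icc 1 (nBoxes U) :=
  hU.mem_flatten.1 (entryAt_mem_flatten hb)

theorem IsStandardF.entryAt_inj (hU : IsStandardF U) (hb : b ∈ boxes U) (hb' : b' ∈ boxes U) :
    entryAt U b = entryAt U b' ↔ b = b' := by
  have hnodup : ((boxes U).map (entryAt U)).Nodup := by
    rw [← flatten_eq_map_entryAt]
    exact (List.Perm.nodup_iff hU).2 List.nodup_range'
  exact ⟨List.inj_on_of_nodup_map hnodup hb hb', congrArg _⟩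

theorem IsStandardF.posOf_entryAt (hU : IsStandardF U) (hb : b ∈ boxes U) :
    posOf U (entryAt U b) = b :=
  have hpos := posOf_mem_boxes_and_entryAt_posOf (entryAt_mem_flatten hb)
  (hU.entryAt_inj hpos.1 hb).1 hpos.2

theorem isStandardF_of_injOn (hinj : ∀ b ∈ boxes U, ∀ b' ∈ boxes U,
      entryAt U b = entryAt U b' → b = b')
    (hmem : ∀ b ∈ boxes U, entryAt U b ∈ Set.Icc 1 (nBoxes U)) : IsStandardF U := by
  have hnodup : U.flatten.Nodup := by
    rw [flatten_eq_map_entryAt]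
    exact (boxes_nodup U).map_on hinj
  refine (hnodup.subperm fun v hv => ?_).perm_of_length_le (by simp [nBoxes])
  rw [flatten_eq_map_entryAt] at hv
  obtain ⟨b, hb, rfl⟩ := List.mem_map.1 hv
  rw [List.mem_range'_1]
  have := hmem b hb
  simp only [Set.mem_Icc] at this
  lia

theorem IsStandardF.entryAt_eq_rank (hU : IsStandardF U) (hb : b ∈ boxes U) :
    entryAt U b = 1 + ((boxes U).filter (entryAt U · < entryAt U b)).length := by
  obtain ⟨h1, hn⟩ := hU.entryAt_mem_Icc hb
  have hrank := (hU.filter (· < entryAt U b)).length_eq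
  have hrange : (List.range' 1 (nBoxes U)).filter (· < entryAt U b) =
      List.range' 1 (entryAt U b - 1) := by
    have := List.Ico.filter_lt 1 (nBoxes U + 1) (entryAt U b)
    rwa [min_eq_right (by lia), List.Ico, List.Ico, Nat.add_sub_cancel] at this
  rw [hrange, List.length_range', flatten_eq_map_entryAt, List.filter_map,
    List.length_map] at hrank
  simp only [Function.comp_def] at hrank
  lia

/-- The boxes of a standard filling, listed by increasing entry. -/
def entryOrder (U : Filling) : List (ℕ × ℕ) := (List.range' 1 (nBoxes U)).map (posOf U)

theorem IsStandardF.entryOrder_perm (hU : IsStandardF U) : (entryOrder U).Perm (boxes U) := by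
  have hboxes : U.flatten.map (posOf U) = boxes U := by
    rw [flatten_eq_map_entryAt, List.map_map]
    exact (List.map_congr_left fun b hb => hU.posOf_entryAt hb).trans (List.map_id _)
  exact hboxes ▸ (List.Perm.map (posOf U) hU).symm

theorem IsStandardF.map_entryAt_entryOrder (hU : IsStandardF U) :
    (entryOrder U).map (entryAt U) = List.range' 1 (nBoxes U) := by
  rw [entryOrder, List.map_map]
  refine (List.map_congr_left fun v hv => ?_).trans (List.map_id _)
  rw [List.mem_range'_1] at hv
  exact hU.entryAt_posOf hv.1 (by lia)

end StandardFillings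

section ReadingOrder

open OrderDual (toDual)

variable {f T U : Filling} {b b' : ℕ × ℕ}

/-- The sort key of the type-reading order of `f`: by entry, then from the bottom row to the top
row, then from left to right. -/
def readingKey (f : Filling) (b : ℕ × ℕ) : ℕ ×ₗ ℕᵒᵈ ×ₗ ℕ :=
  toLex (entryAt f b, toLex (toDual b.1, b.2))

theorem readingKey_lt_iff :
    readingKey f b < readingKey f b' ↔ entryAt f b < entryAt f b' ∨
      entryAt f b = entryAt f b' ∧ (b'.1 < b.1 ∨ b.1 = b'.1 ∧ b.2 < b'.2) := by
  simp only [readingKey, Prod.Lex.toLex_lt_toLex, OrderDual.toDual_lt_toDual,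
    EmbeddingLike.apply_eq_iff_eq]

theorem readingKey_injective (f : Filling) : Function.Injective (readingKey f) := by
  intro b b' h
  simp only [readingKey, EmbeddingLike.apply_eq_iff_eq, Prod.mk.injEq] at h
  exact Prod.ext h.2.1 h.2.2

theorem readingKey_lt_iff_of_col_lt {r j j' : ℕ} (hj : j < j') :
    readingKey f (r, j) < readingKey f (r, j') ↔ entryAt f (r, j) ≤ entryAt f (r, j') := by
  simp [readingKey_lt_iff, hj, le_iff_lt_or_eq]

theorem readingKey_lt_iff_of_row_lt (hrow : b.1 < b'.1) :
    readingKey f b < readingKey f b' ↔ entryAt f b < entryAt f b' := by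
  simp [readingKey_lt_iff, hrow.not_gt, hrow.ne]

theorem beforeB_eq_decide (f : Filling) (b b' : ℕ × ℕ) :
    beforeB f b b' = decide (readingKey f b < readingKey f b') := by
  simp [beforeB, readingKey_lt_iff, Bool.decide_or, Bool.decide_and, Bool.beq_eq_decide_eq]

/-- `IsStandardization T U`: the standard filling `U` has the shape of `T` and numbers the boxes
in the type-reading order of `T`. -/
structure IsStandardization (T U : Filling) : Prop where
  map_length_eq : U.map List.length = T.map List.length
  isStandardF : IsStandardF U
  entryAt_lt_iff : ∀ b ∈ boxes U, ∀ b' ∈ boxes U,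
    entryAt U b < entryAt U b' ↔ readingKey T b < readingKey T b'

theorem boxes_stdFill (f : Filling) : boxes (stdFill f) = boxes f :=
  boxes_congr (map_length_stdFill f)

theorem entryAt_stdFill_eq_rank (hb : b ∈ boxes f) : entryAt (stdFill f) b =
    1 + ((boxes f).filter (readingKey f · < readingKey f b)).length := by
  simp only [entryAt_stdFill hb, beforeB_eq_decide]

theorem entryAt_stdFill_lt_iff (hb : b ∈ boxes f) (hb' : b' ∈ boxes f) :
    entryAt (stdFill f) b < entryAt (stdFill f) b' ↔ readingKey f b < readingKey f b' := by
  rw [entryAt_stdFill_eq_rank hb, entryAt_stdFill_eq_rank hb', Nat.add_lt_add_iff_left,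
    length_filter_lt_lt_iff _ hb]

theorem isStandardF_stdFill (f : Filling) : IsStandardF (stdFill f) := by
  apply isStandardF_of_injOn
  · intro b hb b' hb' heq
    rw [boxes_stdFill] at hb hb'
    refine readingKey_injective f (le_antisymm ?_ ?_) <;> rw [← not_lt]
    · exact fun h => ((entryAt_stdFill_lt_iff hb' hb).2 h).ne' heq
    · exact fun h => ((entryAt_stdFill_lt_iff hb hb').2 h).ne heq
  · rw [nBoxes_eq_length_boxes, boxes_stdFill]
    intro b hb
    have hlt : ((boxes f).filter (readingKey f · < readingKey f b)).length < (boxes f).length :=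
      List.length_filter_lt_length_iff_exists.2 ⟨b, hb, by simp⟩
    rw [entryAt_stdFill_eq_rank hb, Set.mem_Icc]
    lia

theorem isStandardization_stdFill (T : Filling) : IsStandardization T (stdFill T) where
  map_length_eq := map_length_stdFill T
  isStandardF := isStandardF_stdFill T
  entryAt_lt_iff := by
    rw [boxes_stdFill]
    exact fun b hb b' hb' => entryAt_stdFill_lt_iff hb hb'

theorem IsStandardization.stdFill_eq (h : IsStandardization T U) : stdFill T = U := by
  have hboxes : boxes U = boxes T := boxes_congr h.map_length_eq
  refine filling_ext ((map_length_stdFill T).trans h.map_length_eq.symm) fun b hb => ?_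
  rw [boxes_stdFill, ← hboxes] at hb
  rw [entryAt_stdFill_eq_rank (hboxes ▸ hb), h.isStandardF.entryAt_eq_rank hb, ← hboxes]
  congr 2
  exact List.filter_congr fun b' hb' => by simp only [h.entryAt_lt_iff b' hb' b hb]

end ReadingOrder

section Tableaux

variable {A : Type*} {J : Sentence A} {f T U : Filling}

theorem entryAt_eq_getElem {r j : ℕ} (hr : r < f.length) (hj : j < f[r].length) :
    entryAt f (r, j) = f[r][j] := by
  simp [entryAt, hr, hj]

theorem mem_boxes_iff_exists {r j : ℕ} :
    (r, j) ∈ boxes f ↔ ∃ hr : r < f.length, j < f[r].length := by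
  rw [mem_boxes]
  constructor
  · intro hj
    have hr := fst_lt_length (mem_boxes.2 hj)
    exact ⟨hr, List.getD_eq_getElem f [] hr ▸ hj⟩
  · rintro ⟨hr, hj⟩
    rwa [List.getD_eq_getElem f [] hr]

theorem forall_isChain_row_iff :
    (∀ row ∈ f, row.IsChain (· ≤ ·)) ↔
      ∀ r j j', j < j' → (r, j') ∈ boxes f → entryAt f (r, j) ≤ entryAt f (r, j') := by
  simp only [List.isChain_iff_pairwise, List.pairwise_iff_getElem,
    List.forall_mem_iff_forall_getElem, mem_boxes_iff_exists]
  constructor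
  · rintro h r j j' hjj' ⟨hr, hj'⟩
    rw [entryAt_eq_getElem hr hj', entryAt_eq_getElem hr (hjj'.trans hj')]
    exact h r hr j j' _ hj' hjj'
  · intro h r hr j j' hj hj' hjj'
    rw [← entryAt_eq_getElem hr hj', ← entryAt_eq_getElem hr hj]
    exact h r j j' hjj' ⟨hr, hj'⟩

theorem isChain_firstColumn_iff :
    (f.filterMap List.head?).IsChain (· < ·) ↔
      ∀ r r', r < r' → (r, 0) ∈ boxes f → (r', 0) ∈ boxes f →
        entryAt f (r, 0) < entryAt f (r', 0) := by
  rw [List.isChain_iff_pairwise, List.pairwise_filterMap]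
  simp only [List.pairwise_iff_getElem, mem_boxes_iff_exists, List.head?_eq_getElem?,
    List.getElem?_eq_some_iff]
  constructor
  · rintro h r r' hrr' ⟨hr, h0⟩ ⟨hr', h0'⟩
    rw [entryAt_eq_getElem hr h0, entryAt_eq_getElem hr' h0']
    exact h r r' hr hr' hrr' _ ⟨h0, rfl⟩ _ ⟨h0', rfl⟩
  · rintro h r r' hr hr' hrr' _ ⟨h0, rfl⟩ _ ⟨h0', rfl⟩
    rw [← entryAt_eq_getElem hr h0, ← entryAt_eq_getElem hr' h0']
    exact h r r' hrr' ⟨hr, h0⟩ ⟨hr', h0'⟩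

theorem isCIT_iff_entryAt :
    IsCIT J f ↔ f.map List.length = J.map List.length ∧
      (∀ r j j', j < j' → (r, j') ∈ boxes f → entryAt f (r, j) ≤ entryAt f (r, j')) ∧
      (∀ r r', r < r' → (r, 0) ∈ boxes f → (r', 0) ∈ boxes f →
        entryAt f (r, 0) < entryAt f (r', 0)) ∧
      ∀ b ∈ boxes f, 1 ≤ entryAt f b := by
  rw [IsCIT, flatten_eq_map_entryAt, List.forall_mem_map]
  exact and_congr_right fun _ => and_congr forall_isChain_row_iff
    (and_congr_left fun _ => isChain_firstColumn_iff)

theorem mem_boxes_of_col_le {r j j' : ℕ} (hj : j ≤ j') (hb : (r, j') ∈ boxes f) :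
    (r, j) ∈ boxes f :=
  mem_boxes.2 (hj.trans_lt (mem_boxes.1 hb))

theorem IsStandardization.entryAt_le_iff_of_col_lt (h : IsStandardization T U) {r j j' : ℕ}
    (hj : j < j') (hb : (r, j') ∈ boxes U) :
    entryAt T (r, j) ≤ entryAt T (r, j') ↔ entryAt U (r, j) ≤ entryAt U (r, j') := by
  have hb₀ := mem_boxes_of_col_le hj.le hb
  have hne : entryAt U (r, j) ≠ entryAt U (r, j') := by
    simpa [h.isStandardF.entryAt_inj hb₀ hb] using hj.ne
  rw [← readingKey_lt_iff_of_col_lt hj, ← h.entryAt_lt_iff _ hb₀ _ hb, hne.le_iff_lt]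

theorem IsStandardization.isCIT_iff (h : IsStandardization T U)
    (hT : ∀ b ∈ boxes T, 1 ≤ entryAt T b) : IsCIT J T ↔ IsCIT J U := by
  have hboxes : boxes U = boxes T := boxes_congr h.map_length_eq
  have hU : ∀ b ∈ boxes U, 1 ≤ entryAt U b := fun b hb => (h.isStandardF.entryAt_mem_Icc hb).1
  rw [isCIT_iff_entryAt, isCIT_iff_entryAt, and_iff_left hT, and_iff_left hU, h.map_length_eq,
    ← hboxes]
  refine and_congr_right fun _ => and_congr ?_ ?_
  · exact forall₃_congr fun r j j' => forall₂_congr fun hj hb => h.entryAt_le_iff_of_col_lt hj hb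
  · refine forall₃_congr fun r r' hr => forall₂_congr fun hb hb' => ?_
    rw [h.entryAt_lt_iff _ hb _ hb', readingKey_lt_iff_of_row_lt hr]

theorem IsCIT.stdFill (hT : IsCIT J T) : IsCIT J (stdFill T) :=
  ((isStandardization_stdFill T).isCIT_iff (isCIT_iff_entryAt.1 hT).2.2.2).1 hT

end Tableaux

section LabelledLetters

variable {A : Type*} {B : Sentence A} {s v : ℕ}

/-- The letters of `B.flatten`, each paired with `s` plus the number (counted from `1`) of the word
of `B` it comes from. -/
def labelledLetters : ℕ → Sentence A → List (A × ℕ)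
  | _, [] => []
  | s, w :: B => w.map (·, s + 1) ++ labelledLetters (s + 1) B

theorem map_fst_labelledLetters (s : ℕ) (B : Sentence A) :
    (labelledLetters s B).map Prod.fst = B.flatten := by
  induction B generalizing s with
  | nil => rfl
  | cons w B ih => simp [labelledLetters, ih, Function.comp_def]

theorem map_snd_labelledLetters (s : ℕ) (B : Sentence A) :
    (labelledLetters s B).map Prod.snd =
      (List.range' 1 B.flatten.length).map fun v => s + wordNumber B v := by
  induction B generalizing s with
  | nil => rfl
  | cons w B ih =>
    have hhead : (List.range' 1 w.length).map (fun v => s + wordNumber (w :: B) v) =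
        w.map fun _ => s + 1 := by
      refine List.ext_getElem (by simp) fun i hi _ => ?_
      have hle : 1 + i ≤ w.length := by
        simp only [List.length_map, List.length_range'] at hi
        lia
      simp [wordNumber, hle]
    have htail : (List.range' (1 + w.length) B.flatten.length).map
        (fun v => s + wordNumber (w :: B) v) =
          (List.range' 1 B.flatten.length).map fun v => s + 1 + wordNumber B v := by
      rw [add_comm, ← List.map_add_range', List.map_map]
      refine List.map_congr_left fun v hv => ?_
      rw [Function.comp_apply, wordNumber_cons_length_add (List.mem_range'_1.1 hv).1]
      lia
    rw [List.flatten_cons, List.length_append, ← List.range'_append_1, List.map_append, hhead,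
      htail, ← ih, labelledLetters, List.map_append, List.map_map]
    rfl

theorem eq_labelledLetters_iff {l : List (A × ℕ)} :
    l = labelledLetters s B ↔ l.map Prod.fst = B.flatten ∧
      l.map Prod.snd = (List.range' 1 l.length).map fun v => s + wordNumber B v := by
  rw [← map_fst_labelledLetters s B]
  constructor
  · rintro rfl
    refine ⟨rfl, ?_⟩
    rw [map_snd_labelledLetters, ← map_fst_labelledLetters s B, List.length_map]
  · rintro ⟨hfst, hsnd⟩
    have hlength : l.length = B.flatten.length := by
      simpa [← map_fst_labelledLetters s B] using congrArg List.length hfst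
    rw [hlength, ← map_snd_labelledLetters] at hsnd
    exact (List.zip_of_prod hfst hsnd).trans (List.zip_of_prod rfl rfl).symm

theorem lt_of_mem_labelledLetters {p : A × ℕ} (hp : p ∈ labelledLetters s B) : s < p.2 := by
  have hmem := List.mem_map_of_mem (f := Prod.snd) hp
  rw [map_snd_labelledLetters] at hmem
  obtain ⟨v, -, hv⟩ := List.mem_map.1 hmem
  have := one_le_wordNumber B v
  lia

theorem map_fst_filter_labelledLetters (hv : s < v) :
    ((labelledLetters s B).filter (·.2 == v)).map Prod.fst = B.getD (v - (s + 1)) [] := by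
  induction B generalizing s with
  | nil => simp [labelledLetters]
  | cons w B ih =>
    rw [labelledLetters, List.filter_append, List.map_append]
    rcases (Nat.succ_le_of_lt hv).eq_or_lt with rfl | hv'
    · have htail : (labelledLetters (s + 1) B).filter (·.2 == s + 1) = [] :=
        List.filter_eq_nil_iff.2 fun p hp => by simpa using (lt_of_mem_labelledLetters hp).ne'
      simp [htail, List.filter_map, Function.comp_def]
    · have hindex : v - (s + 1) = v - (s + 1 + 1) + 1 := by lia
      rw [ih hv', hindex, List.getD_cons_succ]
      simp [List.filter_map, Function.comp_def, hv'.ne]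

theorem forall_map_fst_filter_eq_iff {l : List (A × ℕ)} (hsorted : l.Pairwise (·.2 ≤ ·.2))
    (hl : ∀ p ∈ l, s < p.2) :
    (∀ v, s < v → (l.filter (·.2 == v)).map Prod.fst = B.getD (v - (s + 1)) []) ↔
      l = labelledLetters s B := by
  refine ⟨fun h => ?_, fun h v hv => h ▸ map_fst_filter_labelledLetters hv⟩
  induction B generalizing s l with
  | nil =>
    refine List.eq_nil_iff_forall_not_mem.2 fun p hp => ?_
    have hnil := h p.2 (hl p hp)
    simp only [List.getD_nil, List.map_eq_nil_iff, List.filter_eq_nil_iff] at hnil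
    exact hnil p hp (beq_self_eq_true _)
  | cons w B ih =>
    have hhead : l.filter (·.2 == s + 1) = w.map (·, s + 1) := by
      have hw := h (s + 1) s.lt_succ_self
      rw [Nat.sub_self, List.getD_cons_zero] at hw
      rw [← hw, List.map_map]
      refine ((List.map_congr_left fun p hp => ?_).trans (List.map_id _)).symm
      exact Prod.ext rfl (beq_iff_eq.1 (List.mem_filter.1 hp).2).symm
    have htail : l.filter (·.2 != s + 1) = labelledLetters (s + 1) B := by
      refine ih (hsorted.filter _) (fun p hp => ?_) fun v hv => ?_
      · obtain ⟨hp, hne⟩ := List.mem_filter.1 hp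
        have := hl p hp
        have : p.2 ≠ s + 1 := by simpa using hne
        lia
      · have hindex : v - (s + 1) = v - (s + 1 + 1) + 1 := by lia
        have hv' := h v (by lia)
        rw [hindex, List.getD_cons_succ] at hv'
        rw [← hv', List.filter_filter]
        congr 1
        refine List.filter_congr fun p _ => ?_
        rw [Bool.and_eq_left_iff_imp]
        simp only [beq_iff_eq, bne_iff_ne]
        rintro rfl
        exact hv.ne'
    rw [eq_filter_beq_append_filter_bne hsorted hl, hhead, htail, labelledLetters]

end LabelledLetters

section Unstandardization

variable {A : Type*} {B : Sentence A} {T U : Filling}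

/-- Replace each entry `v` of `U` by the number of the word of `B` containing letter number `v`. -/
def unstandardize (B : Sentence A) (U : Filling) : Filling := U.map (List.map (wordNumber B))

theorem map_length_unstandardize (B : Sentence A) (U : Filling) :
    (unstandardize B U).map List.length = U.map List.length := map_length_map_map _ U

theorem entryAt_unstandardize {b : ℕ × ℕ} (hb : b ∈ boxes U) :
    entryAt (unstandardize B U) b = wordNumber B (entryAt U b) := entryAt_map_map _ hb

theorem eq_unstandardize_iff (h : U.map List.length = T.map List.length) :
    T = unstandardize B U ↔ ∀ b ∈ boxes U, entryAt T b = wordNumber B (entryAt U b) := by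
  constructor
  · rintro rfl b hb
    exact entryAt_unstandardize hb
  · intro hentry
    refine filling_ext (h.symm.trans (map_length_unstandardize B U).symm) fun b hb => ?_
    rw [← boxes_congr h] at hb
    exact (hentry b hb).trans (entryAt_unstandardize hb).symm

end Unstandardization

section Types

variable {A : Type*} [Inhabited A] {J B : Sentence A} {T U : Filling}

/-- The color of the box `b` in the diagram of `J`, with default `default`. -/
def boxColor (J : Sentence A) (b : ℕ × ℕ) : A := (J.getD b.1 []).getD b.2 default

theorem readWord_eq_map_boxColor (J : Sentence A) (U : Filling) :
    readWord J U = (entryOrder U).map (boxColor J) := by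
  rw [readWord, entryOrder, List.range'_eq_map_range, List.map_map, List.map_map]
  refine List.map_congr_left fun i _ => ?_
  rw [Function.comp_apply, Function.comp_apply, add_comm]
  rfl

/-- The boxes of a filling from the bottom row to the top row, each row from left to right. -/
def bottomUpBoxes (f : Filling) : List (ℕ × ℕ) :=
  ((List.range f.length).reverse.map fun r => (List.range (f.getD r []).length).map (r, ·)).flatten

theorem bottomUpBoxes_perm (f : Filling) : (bottomUpBoxes f).Perm (boxes f) :=
  ((List.reverse_perm _).map _).flatten

theorem pairwise_bottomUpBoxes (f : Filling) :
    (bottomUpBoxes f).Pairwise fun b b' => b'.1 < b.1 ∨ b.1 = b'.1 ∧ b.2 < b'.2 := by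
  rw [bottomUpBoxes, List.pairwise_flatten, List.pairwise_map, List.pairwise_reverse]
  refine ⟨?_, List.pairwise_lt_range.imp fun hr => ?_⟩
  · simp only [List.forall_mem_map, List.pairwise_map]
    exact fun _ _ => List.pairwise_lt_range.imp fun hj => .inr ⟨trivial, hj⟩
  · simp only [List.forall_mem_map]
    exact fun _ _ _ _ => .inl hr

theorem typeWord_eq_map_boxColor (hT : T.map List.length = J.map List.length) (v : ℕ) :
    typeWord J T v = ((bottomUpBoxes T).filter (entryAt T · == v)).map (boxColor J) := by
  rw [typeWord, zip_eq_map_range_getD (length_eq_of_map_length_eq hT) [] [], bottomUpBoxes,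
    List.filter_flatten, List.map_flatten]
  simp only [List.map_reverse, List.map_map]
  congr 2
  refine List.map_congr_left fun r _ => ?_
  simp only [Function.comp_apply, rowWith]
  rw [zip_eq_map_range_getD (length_getD_eq_of_map_length_eq hT r) default 0, List.filter_map,
    List.filter_map, List.map_map, List.map_map]
  rfl

theorem IsStandardization.pairwise_entryOrder (h : IsStandardization T U) :
    (entryOrder U).Pairwise (readingKey T · < readingKey T ·) := by
  have hentries : (entryOrder U).Pairwise (entryAt U · < entryAt U ·) := by
    rw [← List.pairwise_map, h.isStandardF.map_entryAt_entryOrder]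
    exact List.pairwise_lt_range'
  have hperm := h.isStandardF.entryOrder_perm
  exact hentries.imp_of_mem fun hb hb' =>
    (h.entryAt_lt_iff _ (hperm.mem_iff.1 hb) _ (hperm.mem_iff.1 hb')).1

theorem IsStandardization.filter_bottomUpBoxes (h : IsStandardization T U) (v : ℕ) :
    (bottomUpBoxes T).filter (entryAt T · == v) = (entryOrder U).filter (entryAt T · == v) := by
  have hperm : (bottomUpBoxes T).Perm (entryOrder U) :=
    (bottomUpBoxes_perm T).trans
      (boxes_congr h.map_length_eq ▸ h.isStandardF.entryOrder_perm).symm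
  have hbottomUp : ((bottomUpBoxes T).filter (entryAt T · == v)).Pairwise
      (readingKey T · < readingKey T ·) := by
    refine ((pairwise_bottomUpBoxes T).filter _).imp_of_mem fun hb hb' hlt => ?_
    have hv := beq_iff_eq.1 (List.mem_filter.1 hb).2
    have hv' := beq_iff_eq.1 (List.mem_filter.1 hb').2
    exact readingKey_lt_iff.2 (.inr ⟨hv.trans hv'.symm, hlt⟩)
  exact (hperm.filter _).eq_of_pairwise (fun _ _ _ _ hlt hgt => (hlt.asymm hgt).elim)
    hbottomUp (h.pairwise_entryOrder.filter _)

theorem IsStandardization.hasType_iff_labelledLetters (h : IsStandardization T U)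
    (hJ : T.map List.length = J.map List.length) (hT : ∀ b ∈ boxes T, 1 ≤ entryAt T b) :
    HasType J T B ↔
      (entryOrder U).map (fun b => (boxColor J b, entryAt T b)) = labelledLetters 0 B := by
  rw [← forall_map_fst_filter_eq_iff]
  · refine forall₂_congr fun v _ => ?_
    rw [typeWord_eq_map_boxColor hJ, h.filter_bottomUpBoxes, List.filter_map, List.map_map,
      zero_add]
    rfl
  · rw [List.pairwise_map]
    refine h.pairwise_entryOrder.imp fun hlt => ?_
    exact (readingKey_lt_iff.1 hlt).elim le_of_lt fun h => h.1.le
  · rw [List.forall_mem_map]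
    exact fun b hb =>
      hT b (boxes_congr h.map_length_eq ▸ h.isStandardF.entryOrder_perm.mem_iff.1 hb)

theorem IsStandardization.hasType_iff (h : IsStandardization T U)
    (hJ : T.map List.length = J.map List.length) (hT : ∀ b ∈ boxes T, 1 ≤ entryAt T b) :
    HasType J T B ↔ readWord J U = B.flatten ∧ T = unstandardize B U := by
  rw [h.hasType_iff_labelledLetters hJ hT, eq_labelledLetters_iff, List.map_map, List.map_map,
    List.length_map, readWord_eq_map_boxColor, eq_unstandardize_iff h.map_length_eq]
  refine and_congr_right fun _ => ?_
  simp only [zero_add, Function.comp_def]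
  rw [h.isStandardF.entryOrder_perm.length_eq, ← nBoxes_eq_length_boxes,
    ← h.isStandardF.map_entryAt_entryOrder, List.map_map, List.map_inj_left]
  simp only [h.isStandardF.entryOrder_perm.mem_iff, Function.comp_apply]

end Types

section Descents

variable {A : Type*} {J B : Sentence A} {T U : Filling} {d v : ℕ}

theorem isStandardization_iff_readingKey_posOf_lt (hstd : IsStandardF U)
    (hshape : U.map List.length = T.map List.length) :
    IsStandardization T U ↔ ∀ d, 1 ≤ d → d < nBoxes U →
      readingKey T (posOf U d) < readingKey T (posOf U (d + 1)) := by
  constructor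
  · intro h d hd hn
    rw [← h.entryAt_lt_iff _ (hstd.posOf_mem_boxes hd hn.le) _
      (hstd.posOf_mem_boxes d.succ_pos hn), hstd.entryAt_posOf hd hn.le,
      hstd.entryAt_posOf d.succ_pos hn]
    exact d.lt_succ_self
  · intro h
    have hmono : StrictMonoOn (fun v => readingKey T (posOf U v)) (Set.Icc 1 (nBoxes U)) :=
      strictMonoOn_of_lt_succ Set.ordConnected_Icc fun d _ hd hd' => h d hd.1 hd'.2
    refine ⟨hshape, hstd, fun b hb b' hb' => ?_⟩
    simpa only [hstd.posOf_entryAt hb, hstd.posOf_entryAt hb'] using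
      (hmono.lt_iff_lt (hstd.entryAt_mem_Icc hb) (hstd.entryAt_mem_Icc hb')).symm

theorem entryAt_unstandardize_posOf (hstd : IsStandardF U) (hv : 1 ≤ v) (hv' : v ≤ nBoxes U) :
    entryAt (unstandardize B U) (posOf U v) = wordNumber B v := by
  rw [entryAt_unstandardize (hstd.posOf_mem_boxes hv hv'), hstd.entryAt_posOf hv hv']

theorem IsCIT.posOf_col_lt (hcit : IsCIT J U) (hstd : IsStandardF U) (hd : 1 ≤ d)
    (hn : d < nBoxes U) (hrow : rowOf U d = rowOf U (d + 1)) :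
    (posOf U d).2 < (posOf U (d + 1)).2 := by
  have hentry := hstd.entryAt_posOf hd hn.le
  have hentry' := hstd.entryAt_posOf d.succ_pos hn
  by_contra! hle
  rcases hle.eq_or_lt with heq | hlt
  · have hpos : posOf U d = posOf U (d + 1) := Prod.ext hrow heq.symm
    rw [hpos, hentry'] at hentry
    lia
  · have hle := (isCIT_iff_entryAt.1 hcit).2.1 (rowOf U d) _ _ hlt (hstd.posOf_mem_boxes hd hn.le)
    rw [show (rowOf U d, (posOf U (d + 1)).2) = posOf U (d + 1) from Prod.ext hrow rfl,
      show (rowOf U d, (posOf U d).2) = posOf U d from rfl, hentry, hentry'] at hle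
    lia

theorem IsCIT.readingKey_unstandardize_posOf_lt_iff (hcit : IsCIT J U) (hstd : IsStandardF U)
    (hd : 1 ≤ d) (hn : d < nBoxes U) :
    readingKey (unstandardize B U) (posOf U d) < readingKey (unstandardize B U) (posOf U (d + 1)) ↔
      (rowOf U d < rowOf U (d + 1) → IsBreak B d) := by
  have hentry := entryAt_unstandardize_posOf (B := B) hstd hd hn.le
  have hentry' := entryAt_unstandardize_posOf (B := B) hstd d.succ_pos hn
  have hmono : wordNumber B d ≤ wordNumber B (d + 1) := wordNumber_mono B d.le_succ
  rw [isBreak_iff_wordNumber_lt hd]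
  by_cases hrow : rowOf U d < rowOf U (d + 1)
  · rw [readingKey_lt_iff_of_row_lt hrow, hentry, hentry', imp_iff_right hrow]
  · refine iff_of_true (readingKey_lt_iff.2 ?_) fun h => absurd h hrow
    rw [hentry, hentry']
    refine hmono.lt_or_eq.imp_right fun heq => ⟨heq, ?_⟩
    refine (not_lt.1 hrow).lt_or_eq.imp_right fun heq => ⟨heq.symm, ?_⟩
    exact hcit.posOf_col_lt hstd hd hn heq.symm

theorem IsCIT.isStandardization_unstandardize_iff (hcit : IsCIT J U) (hstd : IsStandardF U) :
    IsStandardization (unstandardize B U) U ↔ ∀ d ∈ descList U, IsBreak B d := by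
  rw [isStandardization_iff_readingKey_posOf_lt hstd (map_length_unstandardize B U).symm]
  simp only [mem_descList, and_imp]
  exact forall₃_congr fun d hd hn => hcit.readingKey_unstandardize_posOf_lt_iff hstd hd hn

theorem IsStandardization.isCIT_unstandardize
    (h : IsStandardization (unstandardize B U) U) (hU : IsCIT J U) :
    IsCIT J (unstandardize B U) := by
  refine (h.isCIT_iff ?_).2 hU
  rw [boxes_congr (map_length_unstandardize B U)]
  exact fun b hb => (entryAt_unstandardize hb).symm ▸ one_le_wordNumber B _

end Descents

section Counting

variable {A : Type*} [Inhabited A] {J B : Sentence A} {T U : Filling}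

theorem IsStandardization.hasType_iff_refines_coA (h : IsStandardization T U) (hT : IsCIT J T)
    (hB : B.flatten = [] → B = []) :
    HasType J T B ↔ Refines B (coA J U) ∧ T = unstandardize B U := by
  have hpos : ∀ b ∈ boxes T, 1 ≤ entryAt T b := (isCIT_iff_entryAt.1 hT).2.2.2
  have hU : IsCIT J U := (h.isCIT_iff hpos).1 hT
  rw [h.hasType_iff hT.1 hpos, refines_coA_iff hB]
  refine and_congr_left fun hTU => (and_iff_left ?_).symm
  exact (hU.isStandardization_unstandardize_iff h.isStandardF).1 (hTU ▸ h)

theorem IsCIT.isStandardization_unstandardize (hU : IsCIT J U) (hstd : IsStandardF U)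
    (hB : B.flatten = [] → B = []) (hco : Refines B (coA J U)) :
    IsStandardization (unstandardize B U) U :=
  (hU.isStandardization_unstandardize_iff hstd).2 ((refines_coA_iff hB).1 hco).2

theorem bijOn_stdFill (hB : B.flatten = [] → B = []) :
    Set.BijOn stdFill {T | IsCIT J T ∧ HasType J T B}
      {U | (IsCIT J U ∧ IsStandardF U) ∧ Refines B (coA J U)} := by
  refine Set.InvOn.bijOn (f' := unstandardize B) ⟨?_, ?_⟩ ?_ ?_
  · rintro T ⟨hT, htype⟩
    exact (((isStandardization_stdFill T).hasType_iff_refines_coA hT hB).1 htype).2.symm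
  · rintro U ⟨⟨hU, hstd⟩, hco⟩
    exact (hU.isStandardization_unstandardize hstd hB hco).stdFill_eq
  · rintro T ⟨hT, htype⟩
    exact ⟨⟨hT.stdFill, isStandardF_stdFill T⟩,
      (((isStandardization_stdFill T).hasType_iff_refines_coA hT hB).1 htype).1⟩
  · rintro U ⟨⟨hU, hstd⟩, hco⟩
    have h := hU.isStandardization_unstandardize hstd hB hco
    have hT := h.isCIT_unstandardize hU
    exact ⟨hT, (h.hasType_iff_refines_coA hT hB).2 ⟨hco, rfl⟩⟩

theorem finite_setOf_isCIT_isStandardF {A : Type*} (J : Sentence A) :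
    {U | IsCIT J U ∧ IsStandardF U}.Finite := by
  refine Set.Finite.of_finite_image (f := List.flatten) ?_ ?_
  · refine (List.finite_toSet (List.range' 1 J.flatten.length).permutations).subset ?_
    rintro _ ⟨U, ⟨hcit, hstd⟩, rfl⟩
    rw [IsStandardF, nBoxes, List.length_flatten, hcit.1, ← List.length_flatten] at hstd
    exact List.mem_permutations.2 hstd
  · intro U hU U' hU' hflat
    exact List.eq_iff_flatten_eq.2 ⟨hflat, hU.1.1.trans hU'.1.1.symm⟩

theorem statement5_general (J B : Sentence A) (hB : B.flatten = [] → B = []) :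
    KJB J B = ∑ᶠ C ∈ {C : Sentence A | Refines B C}, LJC J C := calc
  KJB J B = {U | (IsCIT J U ∧ IsStandardF U) ∧ Refines B (coA J U)}.ncard :=
    (bijOn_stdFill hB).ncard_eq
  _ = ∑ᶠ C ∈ {C | Refines B C}, {U | (IsCIT J U ∧ IsStandardF U) ∧ coA J U = C}.ncard :=
    (finsum_mem_ncard_fiber (finite_setOf_isCIT_isStandardF J) (coA J) {C | Refines B C}).symm
  _ = ∑ᶠ C ∈ {C | Refines B C}, LJC J C := by simp only [LJC, and_assoc]

end Counting

/-- For sentences `J` and `B`, `K_{J,B} = Σ_{C ⪰ B} L_{J,C}`, the sum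
running over all coarsenings `C` of `B`. -/
theorem statement5 {A : Type*} [Inhabited A] (J B : Sentence A)
    (hJ : IsSentence J) (hB : IsSentence B) :
    KJB J B = ∑ᶠ C ∈ {C : Sentence A | Refines B C}, LJC J C :=
  statement5_general J B fun hflat =>
    List.eq_nil_iff_forall_not_mem.2 fun w hw => hB w hw (List.flatten_eq_nil_iff.1 hflat w hw)

end ColoredImm
end
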